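/- arXiv:2310.02387 — 6 statements merged into one kernel-verified Lean document; each statement's English description precedes it below -/
import Mathlib

section
/- Let n ≥ 6 be an even integer, let A be the matrix defined below, and let ε be a real number with 0 < ε ≤ 1/(56n³)². Consider any fictitious play sequence (i^{(t)}, j^{(t)}) for the identical-payoff game with matrix A such that (i^{(1)}, j^{(1)}) = (n, 1). If at some round T ≥ 1 the empirical strategy profile (x̂^{(T)}, ŷ^{(T)}) is an ε-approximate Nash equilibrium, then T ≥ 16^{n/2−1}·((n/2−2)!)⁴ and moreover T·n·√ε ≥ 16^{n/2−1}·((n/2−2)!)⁴ − 1. -/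
/-!
The nonzero entries of `A` form a spiral with values `1, 2, …, 2n - 1`. Listing the rows as
`n, 1, n-1, 2, …` and the columns as `1, n, 2, n-1, …` turns `A` into the bidiagonal matrix with
entries `2k + 1` at `(k, k)` and `2k` at `(k, k - 1)` (`Amat_eq`); the play starts at `(0, 0)`.

*Dynamics* (`PlayInv`, `PlayInv.step`). The play climbs the path
`(0,0), (1,0), (1,1), (2,1), …` without skipping or returning, whatever the tie-breaking. Let `X_k`,
`Y_k` be the play counts. Row `k + 1` can be entered only once its utility `(2k+2) Y_k` has caught up
with `(2k+1) Y_k + 2k Y_{k-1}`, the utility of row `k`; all plays of column `k` so far were against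
row `k`, so `X_k ≥ Y_k ≥ 2k Y_{k-1}`. Likewise, when column `k + 1` is entered,
`Y_k ≥ X_{k+1} ≥ (2k+1) X_k`. Hence every row `k` that has been left has `X_k ≥ (2k)!`.

*Equilibria* (`mass_le`). In an `ε`-equilibrium, with `δ = √ε ≤ 1 / (56 n³)`, each row other than the
last has mass at most `δ`. In particular the last row has been reached, so row `n - 2` has been left
and `T δ ≥ X_{n-2} ≥ (2n-4)!`, which dominates the stated bound (`pow_mul_factorial_le`).
-/

open Finset

/-- The `n × n` payoff matrix `A` (1-based indices), closed form:
for `i ∈ {0,…,n/2−1}`: `A_{i+1,i+1} = 4i+2`, `A_{i+1,n−i} = 4i+3`, `A_{n−i,i+1} = 4i+1`;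
for `i ∈ {1,…,n/2−1}`: `A_{n−i,n−i+1} = 4i`; all other entries `0`. -/
noncomputable def Amat (n i j : ℕ) : ℝ :=
  if i = j ∧ 1 ≤ i ∧ i ≤ n / 2 then 4 * (i : ℝ) - 2
  else if i + j = n + 1 ∧ 1 ≤ i ∧ i ≤ n / 2 then 4 * (i : ℝ) - 1
  else if i + j = n + 1 ∧ 1 ≤ j ∧ j ≤ n / 2 then 4 * (j : ℝ) - 3
  else if j = i + 1 ∧ n / 2 + 1 ≤ i ∧ i ≤ n - 1 then 4 * ((n : ℝ) - (i : ℝ))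
  else 0

/-- `x` is a probability vector over coordinates `{1,…,n}`. -/
def ProbVec (n : ℕ) (x : ℕ → ℝ) : Prop :=
  (∀ k ∈ Finset.Icc 1 n, 0 ≤ x k) ∧ ∑ k ∈ Finset.Icc 1 n, x k = 1

/-- The common payoff `xᵀ A y`. -/
noncomputable def pay (n : ℕ) (x y : ℕ → ℝ) : ℝ :=
  ∑ i ∈ Finset.Icc 1 n, ∑ j ∈ Finset.Icc 1 n, x i * Amat n i j * y j

/-- `(x, y)` is an `ε`-approximate Nash equilibrium of the identical-payoff game with matrix `A`. -/
def IsNashEq (n : ℕ) (ε : ℝ) (x y : ℕ → ℝ) : Prop :=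
  ProbVec n x ∧ ProbVec n y ∧
  (∀ x', ProbVec n x' → pay n x y ≥ pay n x' y - ε) ∧
  (∀ y', ProbVec n y' → pay n x y ≥ pay n x y' - ε)

/-- `(I t, J t)` (for `t = 1, 2, …`) is a fictitious play sequence for the
identical-payoff game with matrix `A`. -/
def IsFPSeq (n : ℕ) (I J : ℕ → ℕ) : Prop :=
  (∀ t, 1 ≤ t → I t ∈ Finset.Icc 1 n ∧ J t ∈ Finset.Icc 1 n) ∧
  ∀ t, 2 ≤ t →
    (∀ i ∈ Finset.Icc 1 n,
      ∑ s ∈ Finset.Icc 1 (t - 1), Amat n i (J s) ≤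
        ∑ s ∈ Finset.Icc 1 (t - 1), Amat n (I t) (J s)) ∧
    (∀ j ∈ Finset.Icc 1 n,
      ∑ s ∈ Finset.Icc 1 (t - 1), Amat n (I s) j ≤
        ∑ s ∈ Finset.Icc 1 (t - 1), Amat n (I s) (J t))

/-- Cumulative utility of row `r` at round `t`. -/
noncomputable def Rcum (n : ℕ) (J : ℕ → ℕ) (t r : ℕ) : ℝ :=
  ∑ s ∈ Finset.Icc 1 (t - 1), Amat n r (J s)

/-- Cumulative utility of column `c` at round `t`. -/
noncomputable def Ccum (n : ℕ) (I : ℕ → ℕ) (t c : ℕ) : ℝ :=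
  ∑ s ∈ Finset.Icc 1 (t - 1), Amat n (I s) c

/-- Empirical strategy at round `T` of the player playing the sequence `I`. -/
noncomputable def empir (T : ℕ) (I : ℕ → ℕ) (k : ℕ) : ℝ :=
  (1 / (T : ℝ)) * ∑ s ∈ Finset.Icc 1 T, if I s = k then (1 : ℝ) else 0

/-- The `k`-th standard basis vector (pure strategy `k`). -/
noncomputable def purevec (k : ℕ) : ℕ → ℝ := fun m => if m = k then 1 else 0

/-! ### The bidiagonal game and its dynamics -/

/-- Utility of the `k`-th row of the bidiagonal game against column weights `Y`:
`(2k+1) Y_k + 2k Y_{k-1}`. At `k = 0` the truncated index `k - 1` carries coefficient `0`. -/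
def rowU {S : Type*} [Semiring S] (Y : ℕ → S) (k : ℕ) : S := (2 * k + 1) * Y k + 2 * k * Y (k - 1)

/-- Utility of the `l`-th column of the bidiagonal game against row weights `X`:
`(2l+1) X_l + (2l+2) X_{l+1}`. -/
def colU {S : Type*} [Semiring S] (X : ℕ → S) (l : ℕ) : S :=
  (2 * l + 1) * X l + (2 * l + 2) * X (l + 1)

/-- The invariant of fictitious play in the bidiagonal game. `X` and `Y` count how often each row
and column has been played, and `p`, `q` are the last row and column played, which are also the
largest ones. -/
structure PlayInv (X Y : ℕ → ℕ) (p q : ℕ) : Prop where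
  hqp : q ≤ p
  hpq : p ≤ q + 1
  X0 : ∀ j, p < j → X j = 0
  Y0 : ∀ j, q < j → Y j = 0
  Rmono : ∀ j, j < p → rowU Y j < rowU Y (j + 1)
  Cmono : ∀ j, j < q → colU X j < colU X (j + 1)
  diag : p = q → Y q ≤ X p
  off : p = q + 1 → X p ≤ Y q
  Xpos : 1 ≤ X p
  Ypos : 1 ≤ Y q
  Xfac : ∀ j, j < p → (2 * j).factorial ≤ X j
  Yfac : ∀ j, j < q → (2 * j + 1).factorial ≤ Y j

lemma rowU_step {Y Y' : ℕ → ℕ} {c : ℕ} (h : ∀ j, Y' j = Y j + if c = j then 1 else 0) (j : ℕ) :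
    rowU Y' j = rowU Y j + (if c = j then 2 * j + 1 else 0) + (if c + 1 = j then 2 * j else 0) := by
  rcases j with _ | j
  · simp [rowU, h]
  · simp only [rowU, h, Nat.cast_id]
    have e : j + 1 - 1 = j := rfl
    rw [e]
    split_ifs <;> first | omega | ring

lemma colU_step {X X' : ℕ → ℕ} {r : ℕ} (h : ∀ j, X' j = X j + if r = j then 1 else 0) (j : ℕ) :
    colU X' j = colU X j + (if r = j then 2 * j + 1 else 0)
      + (if r = j + 1 then 2 * j + 2 else 0) := by
  simp only [colU, h, Nat.cast_id]
  split_ifs <;> first | omega | ring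

/-- One round of fictitious play preserves the invariant. Strict monotonicity of the utilities up to
`p`, `q` forbids going back, vanishing counts forbid jumping ahead; when a new row or column is
entered, its utility having caught up with the previous one gives the factorial bound. -/
lemma PlayInv.step {n : ℕ} {X Y X' Y' : ℕ → ℕ} {p q r c : ℕ} (h : PlayInv X Y p q)
    (hp : p < n)
    (hr : ∀ k, k < n → rowU Y k ≤ rowU Y r) (hc : ∀ l, l < n → colU X l ≤ colU X c)
    (hX : ∀ j, X' j = X j + if r = j then 1 else 0)
    (hY : ∀ j, Y' j = Y j + if c = j then 1 else 0) : PlayInv X' Y' r c := by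
  obtain ⟨hqp, hpq, X0, Y0, Rmono, Cmono, diag, off, Xpos, Ypos, Xfac, Yfac⟩ := h
  have hrp : p ≤ r := by
    by_contra hlt
    have h1 := Rmono r (by omega)
    have h2 := hr (r + 1) (by omega)
    omega
  have hcq : q ≤ c := by
    by_contra hlt
    have h1 := Cmono c (by omega)
    have h2 := hc (c + 1) (by omega)
    omega
  have hrq : r ≤ q + 1 := by
    by_contra hlt
    have h1 : rowU Y r = 0 := by
      simp [rowU, Y0 r (by omega), Y0 (r - 1) (by omega)]
    have h2 := hr q (by omega)
    have h3 : Y q ≤ rowU Y q := by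
      simp only [rowU, Nat.cast_id]
      nlinarith [Nat.zero_le (2 * q * Y q), Nat.zero_le (2 * q * Y (q - 1))]
    omega
  have hcp : c ≤ p := by
    by_contra hlt
    have h1 : colU X c = 0 := by
      simp [colU, X0 c (by omega), X0 (c + 1) (by omega)]
    have h2 := hc p (by omega)
    have h3 : X p ≤ colU X p := by
      simp only [colU, Nat.cast_id]
      nlinarith [Nat.zero_le (2 * p * X p), Nat.zero_le ((2 * p + 2) * X (p + 1))]
    omega
  have hRs := rowU_step hY
  have hCs := colU_step hX
  refine ⟨by omega, by omega, ?_, ?_, ?_, ?_, ?_, ?_, ?_, ?_, ?_, ?_⟩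
  · intro j hj
    rw [hX, X0 j (by omega), if_neg (by omega)]
  · intro j hj
    rw [hY, Y0 j (by omega), if_neg (by omega)]
  · intro j hj
    have h1 := hr j (by omega)
    rw [hRs, hRs]
    by_cases hjp : j < p
    · have h2 := Rmono j hjp
      split_ifs <;> omega
    · -- the row `r = p + 1` is new; the column played is `q = p = j`, which favours it by `1`
      have e1 : c = j := by omega
      have e2 : r = j + 1 := by omega
      subst e2
      split_ifs <;> omega
  · intro j hj
    have h1 := hc j (by omega)
    rw [hCs, hCs]
    by_cases hjq : j < q
    · have h2 := Cmono j hjq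
      split_ifs <;> omega
    · have e1 : r = j + 1 := by omega
      have e2 : c = j + 1 := by omega
      subst e2
      split_ifs <;> omega
  · intro e
    subst e
    rw [hX, hY]
    by_cases e2 : p = q
    · have e3 : r = p := by omega
      subst e3; subst e2
      have := diag rfl
      simp; omega
    · have e3 : r = p := by omega
      subst e3
      rw [Y0 r (by omega)]
      simp
  · intro e
    subst e
    rw [hX, hY]
    by_cases e2 : p = q
    · have e3 : c = p := by omega
      subst e3
      rw [X0 (c + 1) (by omega)]
      simp
    · have e3 : p = c + 1 := by omega
      have e4 : q = c := by omega
      subst e3; subst e4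
      have := off rfl
      simp; omega
  · rw [hX]; simp
  · rw [hY]; simp
  · intro j hj
    rw [hX, if_neg (by omega)]
    by_cases hjp : j < p
    · simpa using Xfac j hjp
    · have e1 : j = p := by omega
      have e2 : q = p := by omega
      have e3 : r = p + 1 := by omega
      subst e1; subst e2; subst e3
      have h1 := diag rfl
      have h2 := hr q hp
      rcases q with _ | i
      · simpa using Xpos
      · have h3 := Yfac i (by omega)
        have h4 := Y0 (i + 1 + 1) (by omega)
        simp only [rowU, Nat.cast_id, h4, Nat.add_sub_cancel] at h2
        rw [show 2 * (i + 1) = (2 * i + 1) + 1 by ring, Nat.factorial_succ]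
        nlinarith
  · intro j hj
    rw [hY, if_neg (by omega)]
    by_cases hjq : j < q
    · simpa using Yfac j hjq
    · have e1 : j = q := by omega
      have e2 : p = q + 1 := by omega
      have e3 : c = q + 1 := by omega
      subst e1; subst e2; subst e3
      have h1 := off rfl
      have h2 := hc j (by omega)
      have h3 := Xfac j (by omega)
      have h4 := X0 (j + 1 + 1) (by omega)
      simp only [colU, Nat.cast_id, h4] at h2
      rw [Nat.factorial_succ]
      nlinarith

/-! ### Approximate equilibria of the bidiagonal game -/

/-- In an approximate equilibrium every row and column except the last carries mass at most `δ`.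
If row `k` had more, then row `k + 1` could not beat it by `δ`, which forces the utility of row `k`
down to `O(n² δ)`; but some row has utility at least `1 / n`. The columns are symmetric. -/
lemma mass_le {n : ℕ} {x y : ℕ → ℝ} {δ : ℝ} (hδ : 0 < δ) (hδn : 6 * (n : ℝ) ^ 3 * δ < 1)
    (hx : ∀ k, 0 ≤ x k) (hy : ∀ k, 0 ≤ y k)
    (hRbig : ∃ i < n, 1 ≤ n * rowU y i) (hCbig : ∃ i < n, 1 ≤ n * colU x i)
    (hR : ∀ i < n, ∀ k < n, x k * (rowU y i - rowU y k) ≤ δ ^ 2)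
    (hC : ∀ i < n, ∀ k < n, y k * (colU x i - colU x k) ≤ δ ^ 2) :
    ∀ k, k + 1 < n → x k ≤ δ ∧ y k ≤ δ := by
  have key : ∀ a d : ℝ, δ < a → a * d ≤ δ ^ 2 → d < δ := by
    intro a d ha h
    by_contra hd
    push Not at hd
    nlinarith
  have step : ∀ k, k + 1 < n → 2 * (k : ℝ) * y (k - 1) ≤ 2 * k * δ → x k ≤ δ ∧ y k ≤ δ := by
    intro k hk hprev
    have hk0 : (0 : ℝ) ≤ k := Nat.cast_nonneg k
    have hkn : (k : ℝ) + 2 ≤ n := by exact_mod_cast hk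
    -- utilities of order `n² δ` are too small to be within `δ` of the best one
    have small : ∀ u v : ℝ, u ≤ (2 * k + 1 + (2 * k + 2) ^ 2) * δ → 1 ≤ n * v → v - u < δ →
        False := by
      intro u v hu hv hd
      have h1 : (2 * (k : ℝ) + 1 + (2 * k + 2) ^ 2) + 1 ≤ 6 * n ^ 2 := by nlinarith
      have h2 : v < 6 * n ^ 2 * δ := by nlinarith
      nlinarith
    have hxk : x k ≤ δ := by
      by_contra hlt
      push Not at hlt
      have h1 := key _ _ hlt (hR (k + 1) hk k (by omega))
      simp only [rowU, Nat.add_sub_cancel] at h1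
      push_cast at h1
      have hy1 := mul_nonneg (by positivity : (0 : ℝ) ≤ 2 * (k + 1) + 1) (hy (k + 1))
      have h2 : y k ≤ (2 * k + 1) * δ := by nlinarith
      obtain ⟨i, hi, hbig⟩ := hRbig
      refine small (rowU y k) (rowU y i) ?_ hbig (key _ _ hlt (hR i hi k (by omega)))
      have h3 : (2 * (k : ℝ) + 1) * y k ≤ (2 * k + 1) * ((2 * k + 1) * δ) := by gcongr
      simp only [rowU]
      nlinarith [mul_nonneg hk0 hδ.le]
    refine ⟨hxk, ?_⟩
    by_contra hlt
    push Not at hlt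
    have h1 := key _ _ hlt (hC (k + 1) hk k (by omega))
    simp only [colU] at h1
    push_cast at h1
    have hx1 := mul_nonneg (by positivity : (0 : ℝ) ≤ 2 * (k + 1) + 2) (hx (k + 1 + 1))
    have h0 : (2 * (k : ℝ) + 1) * x k ≤ (2 * k + 1) * δ := by gcongr
    have h2 : x (k + 1) ≤ (2 * k + 2) * δ := by nlinarith
    obtain ⟨i, hi, hbig⟩ := hCbig
    refine small (colU x k) (colU x i) ?_ hbig (key _ _ hlt (hC i hi k (by omega)))
    have h3 : (2 * (k : ℝ) + 2) * x (k + 1) ≤ (2 * k + 2) * ((2 * k + 2) * δ) := by gcongr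
    simp only [colU]
    nlinarith
  intro k
  induction k with
  | zero => exact fun hk => step 0 hk (by simp)
  | succ k ih =>
    intro hk
    refine step (k + 1) hk ?_
    have h1 := (ih (by omega)).2
    rw [Nat.add_sub_cancel]
    gcongr

/-! ### Counting plays -/

/-- How often `a s = k` among the rounds `s = 1, …, t`. -/
def playCount (a : ℕ → ℕ) (t k : ℕ) : ℕ := ∑ s ∈ Finset.Icc 1 t, if a s = k then 1 else 0

lemma playCount_succ (a : ℕ → ℕ) (t k : ℕ) :
    playCount a (t + 1) k = playCount a t k + if a (t + 1) = k then 1 else 0 := by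
  unfold playCount
  rw [Finset.sum_Icc_succ_top (by omega)]

lemma sum_playCount {a : ℕ → ℕ} {n T : ℕ} (ha : ∀ s, 1 ≤ s → a s < n) :
    ∑ k ∈ Finset.range n, playCount a T k = T := by
  unfold playCount
  rw [Finset.sum_comm]
  have : ∀ s ∈ Finset.Icc 1 T, (∑ k ∈ Finset.range n, if a s = k then 1 else 0) = 1 := by
    intro s hs
    rw [Finset.sum_ite_eq, if_pos]
    exact Finset.mem_range.2 (ha s (Finset.mem_Icc.1 hs).1)
  rw [Finset.sum_congr rfl this]
  simp

/-- The payoff of the bidiagonal game: `2k+1` at `(k, k)`, `2k` at `(k, k-1)`, `0` elsewhere. -/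
def bidiag (k l : ℕ) : ℝ := if l = k then 2 * k + 1 else if l + 1 = k then 2 * k else 0

lemma sum_bidiag_row (b : ℕ → ℕ) (t k : ℕ) :
    ∑ s ∈ Finset.Icc 1 t, bidiag k (b s) = rowU (fun j => (playCount b t j : ℝ)) k := by
  simp only [rowU, playCount, Nat.cast_sum, Finset.mul_sum]
  rw [← Finset.sum_add_distrib]
  refine Finset.sum_congr rfl fun s _ => ?_
  rcases k with _ | k
  · simp [bidiag]
  · simp only [bidiag, Nat.add_sub_cancel]
    split_ifs <;> first | omega | (push_cast; ring)

lemma sum_bidiag_col (a : ℕ → ℕ) (t l : ℕ) :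
    ∑ s ∈ Finset.Icc 1 t, bidiag (a s) l = colU (fun j => (playCount a t j : ℝ)) l := by
  simp only [colU, playCount, Nat.cast_sum, Finset.mul_sum]
  rw [← Finset.sum_add_distrib]
  refine Finset.sum_congr rfl fun s _ => ?_
  simp only [bidiag]
  by_cases h1 : a s = l
  · simp [h1]
  by_cases h2 : a s = l + 1
  · simp [h2]
    ring
  · rw [if_neg (by omega), if_neg (by omega), if_neg h1, if_neg h2]
    simp

lemma rowU_cast (Y : ℕ → ℕ) (k : ℕ) : rowU (fun j => (Y j : ℝ)) k = ((rowU Y k : ℕ) : ℝ) := by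
  simp [rowU]

lemma colU_cast (X : ℕ → ℕ) (k : ℕ) : colU (fun j => (X j : ℝ)) k = ((colU X k : ℕ) : ℝ) := by
  simp [colU]

/-- If no action improves on the average of `U` along the play by more than `E`, then an action
played often cannot have low utility. -/
lemma playCount_mul_le {a : ℕ → ℕ} {n T : ℕ} {U : ℕ → ℝ} {E : ℝ} (ha : ∀ s, 1 ≤ s → a s < n)
    (hU : ∀ i < n, T * U i - ∑ s ∈ Finset.Icc 1 T, U (a s) ≤ E) :
    ∀ i < n, ∀ k < n, (playCount a T k : ℝ) * (U i - U k) ≤ E := by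
  intro i hi k hk
  obtain ⟨m, hm, hmax⟩ := Finset.exists_max_image (Finset.range n) U ⟨i, Finset.mem_range.2 hi⟩
  rw [Finset.mem_range] at hm
  calc (playCount a T k : ℝ) * (U i - U k)
      ≤ playCount a T k * (U m - U k) := by
        gcongr
        exact hmax i (Finset.mem_range.2 hi)
    _ = ∑ s ∈ Finset.Icc 1 T, if a s = k then U m - U k else 0 := by
        simp only [playCount, Nat.cast_sum, Finset.sum_mul]
        refine Finset.sum_congr rfl fun s _ => ?_
        split_ifs <;> simp
    _ ≤ ∑ s ∈ Finset.Icc 1 T, (U m - U (a s)) := by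
        refine Finset.sum_le_sum fun s hs => ?_
        split_ifs with h
        · rw [h]
        · exact sub_nonneg.2 (hmax _ (Finset.mem_range.2 (ha s (Finset.mem_Icc.1 hs).1)))
    _ ≤ E := by
        have := hU m hm
        simpa using this

/-! ### Reduction of the given matrix to the bidiagonal game -/

/-- Position of row `i` of `A` in the order `n, 1, n-1, 2, …`. -/
def rowIdx (n i : ℕ) : ℕ := if i ≤ n / 2 then 2 * i - 1 else 2 * (n - i)

/-- Position of column `j` of `A` in the order `1, n, 2, n-1, …`. -/
def colIdx (n j : ℕ) : ℕ := if j ≤ n / 2 then 2 * (j - 1) else 2 * (n - j) + 1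

/-- After reordering rows and columns along the spiral of increasing payoffs `1, 2, …, 2n - 1`, the
matrix `A` is bidiagonal. -/
lemma Amat_eq {n i j : ℕ} (hn : Even n) (hi : i ∈ Finset.Icc 1 n) (hj : j ∈ Finset.Icc 1 n) :
    Amat n i j = bidiag (rowIdx n i) (colIdx n j) := by
  obtain ⟨m, rfl⟩ := hn
  rw [Finset.mem_Icc] at hi hj
  have hm : (m + m) / 2 = m := by omega
  have hr : (i ≤ m ∧ rowIdx (m + m) i + 1 = 2 * i) ∨
      (m < i ∧ rowIdx (m + m) i + 2 * i = 4 * m) := by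
    unfold rowIdx; split_ifs <;> omega
  have hc : (j ≤ m ∧ colIdx (m + m) j + 2 = 2 * j) ∨
      (m < j ∧ colIdx (m + m) j + 2 * j = 4 * m + 1) := by
    unfold colIdx; split_ifs <;> omega
  generalize rowIdx (m + m) i = r at *
  generalize colIdx (m + m) j = c at *
  unfold Amat bidiag
  rw [hm]
  rcases hr with ⟨h1, hr⟩ | ⟨h1, hr⟩
  · have hr' : (r : ℝ) + 1 = 2 * i := by exact_mod_cast hr
    split_ifs <;> first | omega | rfl | linarith
  · have hr' : (r : ℝ) + 2 * i = 4 * m := by exact_mod_cast hr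
    split_ifs <;> first
      | omega
      | rfl
      | (push_cast; linarith)
      | (have h : r + 2 = 2 * j := by omega
         have h' : (r : ℝ) + 2 = 2 * j := by exact_mod_cast h
         linarith)

lemma rowIdx_lt {n i : ℕ} (hn : Even n) (hi : i ∈ Finset.Icc 1 n) : rowIdx n i < n := by
  obtain ⟨m, rfl⟩ := hn
  rw [Finset.mem_Icc] at hi
  unfold rowIdx
  split_ifs <;> omega

lemma colIdx_lt {n j : ℕ} (hn : Even n) (hj : j ∈ Finset.Icc 1 n) : colIdx n j < n := by
  obtain ⟨m, rfl⟩ := hn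
  rw [Finset.mem_Icc] at hj
  unfold colIdx
  split_ifs <;> omega

lemma exists_rowIdx {n k : ℕ} (hn : Even n) (hk : k < n) :
    ∃ i ∈ Finset.Icc 1 n, rowIdx n i = k := by
  obtain ⟨m, rfl⟩ := hn
  rcases Nat.even_or_odd' k with ⟨d, rfl | rfl⟩
  · refine ⟨m + m - d, Finset.mem_Icc.2 (by omega), ?_⟩
    unfold rowIdx
    split_ifs <;> omega
  · refine ⟨d + 1, Finset.mem_Icc.2 (by omega), ?_⟩
    unfold rowIdx
    split_ifs <;> omega

lemma exists_colIdx {n k : ℕ} (hn : Even n) (hk : k < n) :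
    ∃ j ∈ Finset.Icc 1 n, colIdx n j = k := by
  obtain ⟨m, rfl⟩ := hn
  rcases Nat.even_or_odd' k with ⟨d, rfl | rfl⟩
  · refine ⟨d + 1, Finset.mem_Icc.2 (by omega), ?_⟩
    unfold colIdx
    split_ifs <;> omega
  · refine ⟨m + m - d, Finset.mem_Icc.2 (by omega), ?_⟩
    unfold colIdx
    split_ifs <;> omega

lemma probVec_purevec {n i : ℕ} (hi : i ∈ Finset.Icc 1 n) : ProbVec n (purevec i) := by
  refine ⟨fun k _ => ?_, ?_⟩
  · unfold purevec
    split_ifs <;> norm_num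
  · unfold purevec
    rw [Finset.sum_ite_eq', if_pos hi]

lemma sum_mul_empir {n T : ℕ} {a : ℕ → ℕ} (ha : ∀ s, 1 ≤ s → a s ∈ Finset.Icc 1 n) (f : ℕ → ℝ) :
    ∑ k ∈ Finset.Icc 1 n, f k * empir T a k = 1 / T * ∑ s ∈ Finset.Icc 1 T, f (a s) := by
  simp only [empir, Finset.mul_sum]
  rw [Finset.sum_comm]
  refine Finset.sum_congr rfl fun s hs => ?_
  rw [Finset.sum_eq_single (a s)]
  · simp; ring
  · intro b _ hb
    simp [Ne.symm hb]
  · intro h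
    exact absurd (ha s (Finset.mem_Icc.1 hs).1) h

lemma sum_mul_purevec {n i : ℕ} (hi : i ∈ Finset.Icc 1 n) (f : ℕ → ℝ) :
    ∑ k ∈ Finset.Icc 1 n, f k * purevec i k = f i := by
  simp [purevec]
  intro h1
  have := Finset.mem_Icc.1 hi
  omega

lemma pay_eq_row (n : ℕ) (x y : ℕ → ℝ) :
    pay n x y = ∑ i ∈ Finset.Icc 1 n, (∑ j ∈ Finset.Icc 1 n, Amat n i j * y j) * x i := by
  simp only [pay, Finset.sum_mul]
  exact Finset.sum_congr rfl fun i _ => Finset.sum_congr rfl fun j _ => by ring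

lemma pay_eq_col (n : ℕ) (x y : ℕ → ℝ) :
    pay n x y = ∑ j ∈ Finset.Icc 1 n, (∑ i ∈ Finset.Icc 1 n, Amat n i j * x i) * y j := by
  simp only [pay, Finset.sum_mul]
  rw [Finset.sum_comm]
  exact Finset.sum_congr rfl fun i _ => Finset.sum_congr rfl fun j _ => by ring

/-- Pigeonhole: some action is played in at least a fraction `1 / n` of the rounds. -/
lemma exists_big {n T : ℕ} {a : ℕ → ℕ} (ha : ∀ s, 1 ≤ s → a s < n) :
    ∃ i < n, T ≤ n * playCount a T i := by
  by_contra! h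
  have hn : 0 < n := by have := ha 1 le_rfl; omega
  have h1 : ∑ k ∈ Finset.range n, n * playCount a T k < ∑ k ∈ Finset.range n, T :=
    Finset.sum_lt_sum_of_nonempty ⟨0, Finset.mem_range.2 hn⟩ fun k hk => h k (Finset.mem_range.1 hk)
  rw [← Finset.mul_sum, sum_playCount ha] at h1
  simp at h1

lemma pow_mul_factorial_le (m : ℕ) (hm : 3 ≤ m) :
    16 ^ (m - 1) * (m - 2).factorial ^ 4 ≤ (4 * m - 4).factorial := by
  induction m, hm using Nat.le_induction with
  | base => decide
  | succ m hm ih =>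
    obtain ⟨d, rfl⟩ : ∃ d, m = d + 2 := ⟨m - 2, by omega⟩
    have e1 : d + 2 + 1 - 1 = (d + 2 - 1) + 1 := by omega
    have e2 : d + 2 + 1 - 2 = d + 1 := by omega
    have e3 : 4 * (d + 2 + 1) - 4 = (4 * (d + 2) - 4) + 1 + 1 + 1 + 1 := by omega
    have e4 : 4 * (d + 2) - 4 = 4 * d + 4 := by omega
    have e5 : d + 2 - 2 = d := by omega
    rw [e1, e2, e3, Nat.factorial_succ, Nat.factorial_succ, Nat.factorial_succ, Nat.factorial_succ,
      Nat.factorial_succ, pow_succ, mul_pow]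
    rw [e5] at ih
    rw [e4] at ih ⊢
    have h : 16 * (d + 1) ^ 4 ≤
        (4 * d + 4 + 1 + 1 + 1 + 1) * ((4 * d + 4 + 1 + 1 + 1) * ((4 * d + 4 + 1 + 1) * (4 * d + 4 + 1))) := by
      calc 16 * (d + 1) ^ 4 = (2 * d + 2) * ((2 * d + 2) * ((2 * d + 2) * (2 * d + 2))) := by ring
        _ ≤ _ := Nat.mul_le_mul (by omega)
          (Nat.mul_le_mul (by omega) (Nat.mul_le_mul (by omega) (by omega)))
    calc 16 ^ (d + 2 - 1) * 16 * ((d + 1) ^ 4 * d.factorial ^ 4)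
        = (16 * (d + 1) ^ 4) * (16 ^ (d + 2 - 1) * d.factorial ^ 4) := by ring
      _ ≤ _ := Nat.mul_le_mul h ih
      _ = _ := by ring

/-! ### The lower bound -/

/-- The invariant holds along every fictitious play sequence started at `(n, 1)`, that is, at
position `(0, 0)` of the bidiagonal game. -/
lemma playInv_of_isFPSeq {n : ℕ} (hn : 6 ≤ n) (hneven : Even n) {I J : ℕ → ℕ}
    (hFP : IsFPSeq n I J) (hI1 : I 1 = n) (hJ1 : J 1 = 1) (t : ℕ) (ht : 1 ≤ t) :
    PlayInv (playCount (fun s => rowIdx n (I s)) t) (playCount (fun s => colIdx n (J s)) t)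
      (rowIdx n (I t)) (colIdx n (J t)) := by
  obtain ⟨hmem, hopt⟩ := hFP
  induction t, ht using Nat.le_induction with
  | base =>
    have e1 : rowIdx n (I 1) = 0 := by
      rw [hI1]; unfold rowIdx; split_ifs <;> omega
    have e2 : colIdx n (J 1) = 0 := by
      rw [hJ1]; unfold colIdx; split_ifs <;> omega
    have c1 : ∀ k, playCount (fun s => rowIdx n (I s)) 1 k = if 0 = k then 1 else 0 := by
      intro k; rw [playCount, Finset.Icc_self, Finset.sum_singleton, e1]
    have c2 : ∀ k, playCount (fun s => colIdx n (J s)) 1 k = if 0 = k then 1 else 0 := by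
      intro k; rw [playCount, Finset.Icc_self, Finset.sum_singleton, e2]
    rw [e1, e2]
    constructor <;> simp [c1, c2] <;> omega
  | succ t ht ih =>
    have hopt' := hopt (t + 1) (by omega)
    rw [Nat.add_sub_cancel] at hopt'
    have hmt := hmem (t + 1) (by omega)
    have hrow : ∀ i ∈ Finset.Icc 1 n, ∑ s ∈ Finset.Icc 1 t, Amat n i (J s)
        = rowU (playCount (fun s => colIdx n (J s)) t) (rowIdx n i) := by
      intro i hi
      rw [← rowU_cast, ← sum_bidiag_row]
      exact Finset.sum_congr rfl fun s hs =>
        Amat_eq hneven hi (hmem s (Finset.mem_Icc.1 hs).1).2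
    have hcol : ∀ j ∈ Finset.Icc 1 n, ∑ s ∈ Finset.Icc 1 t, Amat n (I s) j
        = colU (playCount (fun s => rowIdx n (I s)) t) (colIdx n j) := by
      intro j hj
      rw [← colU_cast, ← sum_bidiag_col]
      exact Finset.sum_congr rfl fun s hs =>
        Amat_eq hneven (hmem s (Finset.mem_Icc.1 hs).1).1 hj
    refine ih.step (rowIdx_lt hneven (hmem t ht).1) ?_ ?_
      (playCount_succ (fun s => rowIdx n (I s)) t) (playCount_succ (fun s => colIdx n (J s)) t)
    · intro k hk
      obtain ⟨i, hi, rfl⟩ := exists_rowIdx hneven hk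
      have h := hopt'.1 i hi
      rw [hrow i hi, hrow _ hmt.1] at h
      exact_mod_cast h
    · intro k hk
      obtain ⟨j, hj, rfl⟩ := exists_colIdx hneven hk
      have h := hopt'.2 j hj
      rw [hcol j hj, hcol _ hmt.2] at h
      exact_mod_cast h

/-- super-exponential lower bound on the time for fictitious play
to reach an ε-approximate Nash equilibrium. -/
theorem fp_eps_nash_lower_bound
    (n : ℕ) (hn : 6 ≤ n) (hneven : Even n)
    (ε : ℝ) (hε0 : 0 < ε) (hε1 : ε ≤ (1 / (56 * (n : ℝ) ^ 3)) ^ 2)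
    (I J : ℕ → ℕ) (hFP : IsFPSeq n I J) (hI1 : I 1 = n) (hJ1 : J 1 = 1)
    (T : ℕ) (hT : 1 ≤ T)
    (hNE : IsNashEq n ε (empir T I) (empir T J)) :
    (T : ℝ) ≥ 16 ^ (n / 2 - 1) * ((n / 2 - 2).factorial : ℝ) ^ 4 ∧
      (T : ℝ) * n * Real.sqrt ε ≥ 16 ^ (n / 2 - 1) * ((n / 2 - 2).factorial : ℝ) ^ 4 - 1 := by
  have hmem := hFP.1
  have hinv := playInv_of_isFPSeq hn hneven hFP hI1 hJ1 T hT
  obtain ⟨-, -, hNr, hNc⟩ := hNE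
  set a : ℕ → ℕ := fun s => rowIdx n (I s) with ha
  set b : ℕ → ℕ := fun s => colIdx n (J s) with hb
  have han : ∀ s, 1 ≤ s → a s < n := fun s hs => rowIdx_lt hneven (hmem s hs).1
  have hbn : ∀ s, 1 ≤ s → b s < n := fun s hs => colIdx_lt hneven (hmem s hs).2
  have hT0 : (0 : ℝ) < T := by exact_mod_cast hT
  have hn6 : (6 : ℝ) ≤ n := by exact_mod_cast hn
  set X : ℕ → ℝ := fun j => (playCount a T j : ℝ) with hX
  set Y : ℕ → ℝ := fun j => (playCount b T j : ℝ) with hY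
  -- utilities of pure actions against the empirical strategies
  have hrow : ∀ i ∈ Finset.Icc 1 n,
      ∑ j ∈ Finset.Icc 1 n, Amat n i j * empir T J j = 1 / T * rowU Y (rowIdx n i) := by
    intro i hi
    rw [sum_mul_empir (fun s hs => (hmem s hs).2), hY, ← sum_bidiag_row]
    congr 1
    exact Finset.sum_congr rfl fun s hs => Amat_eq hneven hi (hmem s (Finset.mem_Icc.1 hs).1).2
  have hcol : ∀ j ∈ Finset.Icc 1 n,
      ∑ i ∈ Finset.Icc 1 n, Amat n i j * empir T I i = 1 / T * colU X (colIdx n j) := by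
    intro j hj
    rw [sum_mul_empir (a := I) (fun s hs => (hmem s hs).1) (fun i => Amat n i j), hX,
      ← sum_bidiag_col]
    congr 1
    exact Finset.sum_congr rfl fun s hs => Amat_eq hneven (hmem s (Finset.mem_Icc.1 hs).1).1 hj
  have hR : ∀ i < n, ∀ k < n, X k * (rowU Y i - rowU Y k) ≤ T ^ 2 * ε := by
    refine playCount_mul_le han fun i hi => ?_
    obtain ⟨i, hi', rfl⟩ := exists_rowIdx hneven hi
    have h := hNr _ (probVec_purevec hi')
    rw [pay_eq_row, pay_eq_row, sum_mul_purevec hi', sum_mul_empir (fun s hs => (hmem s hs).1),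
      hrow i hi', Finset.sum_congr rfl fun s hs => hrow (I s) (hmem s (Finset.mem_Icc.1 hs).1).1,
      ← Finset.mul_sum] at h
    have h2 := mul_le_mul_of_nonneg_left h (sq_nonneg (T : ℝ))
    field_simp at h2
    linarith
  have hC : ∀ i < n, ∀ k < n, Y k * (colU X i - colU X k) ≤ T ^ 2 * ε := by
    refine playCount_mul_le hbn fun i hi => ?_
    obtain ⟨i, hi', rfl⟩ := exists_colIdx hneven hi
    have h := hNc _ (probVec_purevec hi')
    rw [pay_eq_col, pay_eq_col, sum_mul_purevec hi', sum_mul_empir (fun s hs => (hmem s hs).2),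
      hcol i hi', Finset.sum_congr rfl fun s hs => hcol (J s) (hmem s (Finset.mem_Icc.1 hs).1).2,
      ← Finset.mul_sum] at h
    have h2 := mul_le_mul_of_nonneg_left h (sq_nonneg (T : ℝ))
    field_simp at h2
    linarith
  set δ := Real.sqrt ε with hδ
  have hδ0 : 0 < δ := Real.sqrt_pos.2 hε0
  have hδ2 : δ ^ 2 = ε := Real.sq_sqrt hε0.le
  have hδle : δ ≤ 1 / (56 * (n : ℝ) ^ 3) := by
    rw [hδ]
    exact Real.sqrt_le_iff.2 ⟨by positivity, hε1⟩
  have hδn : 56 * (n : ℝ) ^ 3 * δ ≤ 1 := by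
    rw [le_div_iff₀ (by positivity)] at hδle
    linarith
  have hnd : (n : ℝ) * δ < 1 := by
    have : (n : ℝ) ≤ n ^ 3 := le_self_pow₀ (by linarith) (by norm_num)
    nlinarith [mul_le_mul_of_nonneg_right this hδ0.le]
  have hrs : ∀ k, rowU (fun j => Y j / T) k = rowU Y k / T := fun k => by simp only [rowU]; ring
  have hcs : ∀ k, colU (fun j => X j / T) k = colU X k / T := fun k => by simp only [colU]; ring
  have hX0 : ∀ k, 0 ≤ X k := fun k => Nat.cast_nonneg _
  have hY0 : ∀ k, 0 ≤ Y k := fun k => Nat.cast_nonneg _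
  have hmass := mass_le (n := n) (x := fun j => X j / T) (y := fun j => Y j / T) hδ0
    (by nlinarith [mul_pos (pow_pos (by linarith : (0 : ℝ) < n) 3) hδ0])
    (fun k => div_nonneg (hX0 k) hT0.le) (fun k => div_nonneg (hY0 k) hT0.le)
    (by
      obtain ⟨i, hi, h⟩ := exists_big (T := T) hbn
      refine ⟨i, hi, ?_⟩
      have h' : (T : ℝ) ≤ n * Y i := by simp only [hY]; exact_mod_cast h
      have h2 : Y i ≤ rowU Y i := by
        simp only [rowU]
        nlinarith [mul_nonneg (Nat.cast_nonneg (α := ℝ) i) (hY0 i),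
          mul_nonneg (Nat.cast_nonneg (α := ℝ) i) (hY0 (i - 1))]
      rw [hrs, ← mul_div_assoc, le_div_iff₀ hT0]
      nlinarith)
    (by
      obtain ⟨i, hi, h⟩ := exists_big (T := T) han
      refine ⟨i, hi, ?_⟩
      have h' : (T : ℝ) ≤ n * X i := by simp only [hX]; exact_mod_cast h
      have h2 : X i ≤ colU X i := by
        simp only [colU]
        nlinarith [mul_nonneg (Nat.cast_nonneg (α := ℝ) i) (hX0 i), hX0 (i + 1),
          mul_nonneg (Nat.cast_nonneg (α := ℝ) i) (hX0 (i + 1))]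
      rw [hcs, ← mul_div_assoc, le_div_iff₀ hT0]
      nlinarith)
    (by
      intro i hi k hk
      have h := hR i hi k hk
      rw [hrs, hrs, ← sub_div, div_mul_div_comm, div_le_iff₀ (by positivity), hδ2]
      linarith)
    (by
      intro i hi k hk
      have h := hC i hi k hk
      rw [hcs, hcs, ← sub_div, div_mul_div_comm, div_le_iff₀ (by positivity), hδ2]
      linarith)
  have hXle : ∀ k, k + 1 < n → X k ≤ T * δ := by
    intro k hk
    have h := (hmass k hk).1
    rw [div_le_iff₀ hT0] at h
    linarith
  -- the last row must have been reached, since the others cannot carry all the mass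
  have hlast : n - 1 ≤ a T := by
    by_contra hlt
    have hz : X (n - 1) = 0 := by
      simp only [hX]
      exact_mod_cast hinv.X0 (n - 1) (Nat.lt_of_not_le hlt)
    have hsum : ∑ k ∈ Finset.range n, X k = T := by
      simp only [hX]
      exact_mod_cast sum_playCount (T := T) han
    have hle : ∑ k ∈ Finset.range n, X k ≤ ∑ k ∈ Finset.range n, T * δ := by
      refine Finset.sum_le_sum fun k hk => ?_
      rw [Finset.mem_range] at hk
      rcases Nat.lt_or_ge (k + 1) n with h | h
      · exact hXle k h
      · have e : k = n - 1 := by omega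
        rw [e, hz]
        positivity
    rw [hsum, Finset.sum_const, Finset.card_range, nsmul_eq_mul] at hle
    nlinarith
  have hfac : ((2 * (n - 2)).factorial : ℝ) ≤ X (n - 2) := by
    have hlt : n - 2 < a T := by omega
    simp only [hX]
    exact_mod_cast hinv.Xfac (n - 2) hlt
  have hTδ : X (n - 2) ≤ T * δ := hXle (n - 2) (by omega)
  have hbound : (16 : ℝ) ^ (n / 2 - 1) * ((n / 2 - 2).factorial : ℝ) ^ 4
      ≤ ((2 * (n - 2)).factorial : ℝ) := by
    have h := pow_mul_factorial_le (n / 2) (by omega)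
    have e : 4 * (n / 2) - 4 = 2 * (n - 2) := by
      obtain ⟨m, rfl⟩ := hneven
      omega
    rw [e] at h
    exact_mod_cast h
  have hTn : (T : ℝ) * δ ≤ T * n * δ := by
    have : (T : ℝ) * 1 ≤ T * n := by gcongr; linarith
    nlinarith
  constructor
  · nlinarith
  · linarith
end

section
/- Let n ≥ 4 be an even integer and let A be the matrix defined below. The pair of pure strategies (e_{n/2}, e_{n/2+1}) is a 0-approximate Nash equilibrium of the identical-payoff game with matrix A, and it is the unique pure Nash equilibrium: for any k, l ∈ {1,…,n}, if (e_k, e_l) is a 0-approximate Nash equilibrium then (k, l) = (n/2, n/2+1). -/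
/-!
Payoffs of pure profiles are matrix entries, and `(n/2, n/2+1)` holds the largest entry
`4(n/2) - 1` of `A`, so it is an equilibrium even against mixed deviations.

For uniqueness, a pure equilibrium `(k, l)` must be an entry that is maximal in its row and in its
column. The maximum of row `k` is attained only at the antidiagonal column `n + 1 - k`, so
`l = n + 1 - k`. An antidiagonal entry in the lower half (`k > n/2`) is beaten in its column by the
diagonal entry (`4l - 3 < 4l - 2`), and one in the upper half with `k < n/2` is beaten in its column
by the entry of row `l - 1` (`4k - 1 < 4k`). Only `k = n/2` remains.
-/

open Finset

theorem pay_purevec_right (n : ℕ) (x : ℕ → ℝ) {l : ℕ} (hl : l ∈ Icc 1 n) :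
    pay n x (purevec l) = ∑ i ∈ Icc 1 n, x i * Amat n i l := by
  unfold pay purevec
  refine sum_congr rfl fun i _ => ?_
  simp only [mul_ite, mul_one, mul_zero, sum_ite_eq', if_pos hl]

theorem pay_purevec_left (n : ℕ) (y : ℕ → ℝ) {k : ℕ} (hk : k ∈ Icc 1 n) :
    pay n (purevec k) y = ∑ j ∈ Icc 1 n, y j * Amat n k j := by
  unfold pay purevec
  rw [sum_comm]
  refine sum_congr rfl fun j _ => ?_
  simp only [ite_mul, one_mul, zero_mul, sum_ite_eq', if_pos hk]
  ring

theorem pay_purevec (n : ℕ) {k l : ℕ} (hk : k ∈ Icc 1 n) (hl : l ∈ Icc 1 n) :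
    pay n (purevec k) (purevec l) = Amat n k l := by
  rw [pay_purevec_right n _ hl]
  simp only [purevec, ite_mul, one_mul, zero_mul, sum_ite_eq', if_pos hk]

theorem probVec_purevec_s3 (n : ℕ) {k : ℕ} (hk : k ∈ Icc 1 n) : ProbVec n (purevec k) := by
  refine ⟨fun m _ => ?_, ?_⟩
  · unfold purevec
    split_ifs <;> norm_num
  · simp only [purevec, sum_ite_eq', if_pos hk]

theorem ProbVec.sum_mul_le {n : ℕ} {x : ℕ → ℝ} (hx : ProbVec n x) {f : ℕ → ℝ} {c : ℝ}
    (hf : ∀ i, f i ≤ c) : ∑ i ∈ Icc 1 n, x i * f i ≤ c := by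
  calc ∑ i ∈ Icc 1 n, x i * f i ≤ ∑ i ∈ Icc 1 n, x i * c :=
        sum_le_sum fun i hi => mul_le_mul_of_nonneg_left (hf i) (hx.1 i hi)
    _ = c := by rw [← sum_mul, hx.2, one_mul]

theorem Amat_le {m : ℕ} (hm : 2 ≤ m) (i j : ℕ) : Amat (2 * m) i j ≤ 4 * (m : ℝ) - 1 := by
  have hm' : (2 : ℝ) ≤ m := by exact_mod_cast hm
  have h2 : 2 * m / 2 = m := by omega
  unfold Amat
  rw [h2]
  split_ifs with h1 h2 h3 h4
  · have : (i : ℝ) ≤ m := by exact_mod_cast h1.2.2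
    linarith
  · have : (i : ℝ) ≤ m := by exact_mod_cast h2.2.2
    linarith
  · have : (j : ℝ) ≤ m := by exact_mod_cast h3.2.2
    linarith
  · have : (m : ℝ) + 1 ≤ i := by exact_mod_cast h4.2.1
    push_cast
    linarith
  · linarith

theorem Amat_diag {m i : ℕ} (h1 : 1 ≤ i) (hi : i ≤ m) : Amat (2 * m) i i = 4 * (i : ℝ) - 2 := by
  unfold Amat
  rw [if_pos (by omega)]

theorem Amat_anti_upper {m i j : ℕ} (hij : i + j = 2 * m + 1) (h1 : 1 ≤ i) (hi : i ≤ m) :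
    Amat (2 * m) i j = 4 * (i : ℝ) - 1 := by
  unfold Amat
  rw [if_neg (by omega), if_pos (by omega)]

theorem Amat_anti_lower {m i j : ℕ} (hij : i + j = 2 * m + 1) (h1 : 1 ≤ j) (hj : j ≤ m) :
    Amat (2 * m) i j = 4 * (j : ℝ) - 3 := by
  unfold Amat
  rw [if_neg (by omega), if_neg (by omega), if_pos (by omega)]

theorem Amat_superdiag {m i : ℕ} (h1 : m + 1 ≤ i) (hi : i + 1 ≤ 2 * m) :
    Amat (2 * m) i (i + 1) = 4 * (2 * (m : ℝ) - i) := by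
  unfold Amat
  rw [if_neg (by omega), if_neg (by omega), if_neg (by omega), if_pos (by omega)]
  push_cast
  ring

/-- The antidiagonal entry is the strict maximum of its row. -/
theorem Amat_lt_anti {m k l j : ℕ} (hk1 : 1 ≤ k) (hk : k ≤ 2 * m) (hj : k + j = 2 * m + 1)
    (hl : l ≠ j) : Amat (2 * m) k l < Amat (2 * m) k j := by
  have hj' : (k : ℝ) + j = 2 * m + 1 := by exact_mod_cast hj
  have hk1' : (1 : ℝ) ≤ k := by exact_mod_cast hk1
  have hj1' : (1 : ℝ) ≤ j := by exact_mod_cast (by omega : 1 ≤ j)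
  have hr : 2 * m / 2 = m := by omega
  rcases le_or_gt k m with h | h
  · rw [Amat_anti_upper hj hk1 h]
    unfold Amat
    rw [if_neg (c := k + l = 2 * m + 1 ∧ _) (by omega),
      if_neg (c := k + l = 2 * m + 1 ∧ _) (by omega), if_neg (c := l = k + 1 ∧ _) (by omega)]
    split_ifs <;> linarith
  · rw [Amat_anti_lower hj (by omega) (by omega)]
    unfold Amat
    rw [if_neg (c := k = l ∧ _) (by omega), if_neg (c := k + l = 2 * m + 1 ∧ _) (by omega),
      if_neg (c := k + l = 2 * m + 1 ∧ _) (by omega)]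
    push_cast
    split_ifs <;> linarith

/-- `(e_{n/2}, e_{n/2+1})` is the unique pure Nash equilibrium. -/
theorem unique_pure_nash
    (n : ℕ) (hn : 4 ≤ n) (hneven : Even n) :
    IsNashEq n 0 (purevec (n / 2)) (purevec (n / 2 + 1)) ∧
      ∀ k ∈ Finset.Icc 1 n, ∀ l ∈ Finset.Icc 1 n,
        IsNashEq n 0 (purevec k) (purevec l) → k = n / 2 ∧ l = n / 2 + 1 := by
  obtain ⟨m, rfl⟩ : ∃ m, n = 2 * m := hneven.exists_two_nsmul _
  have hhalf : 2 * m / 2 = m := by omega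
  rw [hhalf]
  have hm2 : 2 ≤ m := by omega
  have hm : m ∈ Icc 1 (2 * m) := mem_Icc.2 (by omega)
  have hm1 : m + 1 ∈ Icc 1 (2 * m) := mem_Icc.2 (by omega)
  refine ⟨⟨probVec_purevec_s3 _ hm, probVec_purevec_s3 _ hm1, fun x hx => ?_, fun y hy => ?_⟩, ?_⟩
  · rw [pay_purevec _ hm hm1, Amat_anti_upper (by omega) (by omega) le_rfl, sub_zero,
      pay_purevec_right _ _ hm1]
    exact hx.sum_mul_le fun i => Amat_le hm2 i _
  · rw [pay_purevec _ hm hm1, Amat_anti_upper (by omega) (by omega) le_rfl, sub_zero,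
      pay_purevec_left _ _ hm]
    exact hy.sum_mul_le fun j => Amat_le hm2 _ j
  · rintro k hk l hl ⟨-, -, hcol, hrow⟩
    have hcol' : ∀ i ∈ Icc 1 (2 * m), Amat (2 * m) i l ≤ Amat (2 * m) k l := fun i hi => by
      simpa [pay_purevec, hi, hk, hl] using hcol _ (probVec_purevec_s3 _ hi)
    have hrow' : ∀ j ∈ Icc 1 (2 * m), Amat (2 * m) k j ≤ Amat (2 * m) k l := fun j hj => by
      simpa [pay_purevec, hj, hk, hl] using hrow _ (probVec_purevec_s3 _ hj)
    rw [mem_Icc] at hk hl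
    have hkl : k + l = 2 * m + 1 := by
      by_contra hne
      have hlt : Amat (2 * m) k l < Amat (2 * m) k (2 * m + 1 - k) :=
        Amat_lt_anti hk.1 hk.2 (by omega) (by omega)
      exact absurd (hrow' (2 * m + 1 - k) (mem_Icc.2 (by omega))) (not_le.2 hlt)
    have hkl' : (k : ℝ) + l = 2 * m + 1 := by exact_mod_cast hkl
    rcases lt_trichotomy k m with h | h | h
    -- Moving to row `l - 1` raises the payoff from `4k - 1` to `4k`.
    · have hdev := hcol' (l - 1) (mem_Icc.2 (by omega))
      obtain ⟨p, rfl⟩ : ∃ p, l = p + 1 := ⟨l - 1, by omega⟩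
      rw [Nat.add_sub_cancel, Amat_superdiag (by omega) (by omega),
        Amat_anti_upper hkl hk.1 h.le] at hdev
      push_cast at hkl'
      linarith
    · omega
    -- Moving to row `l` raises the payoff from `4l - 3` to `4l - 2`.
    · have hdev := hcol' l (mem_Icc.2 hl)
      rw [Amat_diag hl.1 (by omega), Amat_anti_lower hkl hl.1 (by omega)] at hdev
      linarith
end

section
/- Let n ≥ 4 be an even integer and let A be the matrix defined below. Consider any fictitious play sequence (i^{(t)}, j^{(t)}) for the identical-payoff game with matrix A such that (i^{(1)}, j^{(1)}) = (n, 1). Then there exist rounds 1 = T_0 < T_1 < ⋯ < T_{n/2−1} such that for every ℓ ∈ {0,…,n/2−1}: (1) (i^{(T_ℓ)}, j^{(T_ℓ)}) = (n−ℓ, ℓ+1) and the pair (n−ℓ, ℓ+1) is not played at any round t < T_ℓ; (2) R^{(T_ℓ)}_r = 0 for every row r with ℓ+1 ≤ r ≤ n−ℓ−1; (3) C^{(T_ℓ)}_c = 0 for every column c with ℓ+2 ≤ c ≤ n−ℓ. Moreover R^{(T_1)}_{n−1} ≥ 4, and for every ℓ ∈ {2,…,n/2−1}, R^{(T_ℓ)}_{n−ℓ}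 ≥ 4ℓ·(4ℓ−1)·(4ℓ−2)·(4ℓ−3)·R^{(T_{ℓ−1})}_{n−ℓ+1}. -/
/-!
Write `R`, `C` for the cumulative utilities of rows and columns. The nonzero entries `1, 2, 3, …` of
the matrix form a spiral `(n,1), (1,1), (1,n), (n-1,n), (n-1,2), (2,2), …`, two consecutive cells
sharing a row or a column, and play follows that spiral.

One leg of it is `Play.stage`. Suppose `(p, q)` is played, both strategies being currently optimal,
and the best response to `q` is a strategy `p'` whose cumulative utility is still `0` and whose
payoff against `q` exceeds that of `p` by one. Each repetition of `(p, q)` makes `q` a strict best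
response and lets `p'` catch up with `p` by exactly one unit. So `(p, q)` is repeated `k` times,
where `k` is at least the cumulative utility of `p` at the start, and then `(p', q)` is played.
The players enter symmetrically, so this serves for moves of either one.

Four legs lead from `(n-ℓ, ℓ+1)` to `(n-ℓ-1, ℓ+2)` (`phase`). In each leg the cumulative utility
of the strategy just reached becomes at least (payoff) × (length of the leg), which bounds the length
of the next leg from below; this multiplies `R_{n-ℓ}` by `(4ℓ+1)(4ℓ+2)(4ℓ+3)(4ℓ+4)`. Strategies
further inside the spiral keep utility `0`. In particular row `ℓ+1` has utility `0` at `T_ℓ`, so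
column `ℓ+1` was not played earlier.
-/

open Finset

/-! ### One leg of the spiral -/

/-- Fictitious play for the common payoff matrix `B`, seen from the player whose strategies `X t`
index the first argument of `B`; `Y t` are the strategies of the other player, and `U`, `V` are the
cumulative utilities of the two players. -/
structure Play (n : ℕ) (B : ℕ → ℕ → ℝ) (X Y : ℕ → ℕ) (U V : ℕ → ℕ → ℝ) : Prop where
  memX : ∀ t, 1 ≤ t → X t ∈ Finset.Icc 1 n
  memY : ∀ t, 1 ≤ t → Y t ∈ Finset.Icc 1 n
  stepU : ∀ t, 1 ≤ t → ∀ r, U (t + 1) r = U t r + B r (Y t)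
  stepV : ∀ t, 1 ≤ t → ∀ c, V (t + 1) c = V t c + B (X t) c
  optU : ∀ t, 2 ≤ t → ∀ r ∈ Finset.Icc 1 n, U t r ≤ U t (X t)
  optV : ∀ t, 2 ≤ t → ∀ c ∈ Finset.Icc 1 n, V t c ≤ V t (Y t)

theorem Play.swap {n : ℕ} {B : ℕ → ℕ → ℝ} {X Y : ℕ → ℕ} {U V : ℕ → ℕ → ℝ}
    (h : Play n B X Y U V) : Play n (fun c r => B r c) Y X V U :=
  ⟨h.memY, h.memX, h.stepV, h.stepU, h.optV, h.optU⟩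

theorem Play.const {n : ℕ} {B : ℕ → ℕ → ℝ} {X Y : ℕ → ℕ} {U V : ℕ → ℕ → ℝ}
    (h : Play n B X Y U V) {t₀ p q : ℕ} (ht₀ : 1 ≤ t₀) (k : ℕ)
    (hc : ∀ j, j < k → X (t₀ + j) = p ∧ Y (t₀ + j) = q) :
    (∀ r, U (t₀ + k) r = U t₀ r + k * B r q) ∧ (∀ c, V (t₀ + k) c = V t₀ c + k * B p c) := by
  induction k with
  | zero => simp
  | succ k ih =>
    obtain ⟨h1, h2⟩ := ih fun j hj => hc j (by omega)
    obtain ⟨e1, e2⟩ := hc k (by omega)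
    refine ⟨fun r => ?_, fun c => ?_⟩
    · rw [← add_assoc, h.stepU _ (by omega), h1, e2]; push_cast; ring
    · rw [← add_assoc, h.stepV _ (by omega), h2, e1]; push_cast; ring

/-- As long as the moving player sticks to `p`, the other one sticks to `q`, his strict best
response to `p`. -/
theorem Play.stick {n : ℕ} {B : ℕ → ℕ → ℝ} {X Y : ℕ → ℕ} {U V : ℕ → ℕ → ℝ}
    (h : Play n B X Y U V) {t₀ p q : ℕ} (ht₀ : 1 ≤ t₀)
    (hY : Y t₀ = q) (hq : q ∈ Finset.Icc 1 n)
    (hV : ∀ c ∈ Finset.Icc 1 n, V t₀ c ≤ V t₀ q)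
    (hB : ∀ c ∈ Finset.Icc 1 n, c ≠ q → B p c < B p q) (k : ℕ)
    (hX : ∀ j, j < k → X (t₀ + j) = p) : ∀ j, j ≤ k → Y (t₀ + j) = q := by
  intro j
  induction j using Nat.strong_induction_on with
  | _ j ih =>
    intro hj
    rcases Nat.eq_zero_or_pos j with rfl | hpos
    · simpa using hY
    obtain ⟨-, h2⟩ := h.const ht₀ j fun i hi => ⟨hX i (by omega), ih i hi (by omega)⟩
    by_contra hne
    have hm := h.memY (t₀ + j) (by omega)
    have ho := h.optV (t₀ + j) (by omega) q hq
    rw [h2, h2] at ho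
    have hlt := hB _ hm hne
    have hle := hV _ hm
    have : (0 : ℝ) < j := by exact_mod_cast hpos
    nlinarith

/-- One leg of the spiral: `(p, q)` is played `k` times, and then the first player moves to `p'`. -/
theorem Play.stage {n : ℕ} {B : ℕ → ℕ → ℝ} {X Y : ℕ → ℕ} {U V : ℕ → ℕ → ℝ}
    (h : Play n B X Y U V) {t₀ p p' q : ℕ} (ht₀ : 1 ≤ t₀)
    (hX : X t₀ = p) (hY : Y t₀ = q)
    (hU : ∀ r ∈ Finset.Icc 1 n, U t₀ r ≤ U t₀ p)
    (hV : ∀ c ∈ Finset.Icc 1 n, V t₀ c ≤ V t₀ q)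
    (hp' : p' ∈ Finset.Icc 1 n) (hU' : U t₀ p' = 0)
    (hBp : 0 < B p q) (hBp' : B p' q = B p q + 1)
    (hBr : ∀ r ∈ Finset.Icc 1 n, r ≠ p → r ≠ p' → B r q = 0)
    (hB : ∀ c ∈ Finset.Icc 1 n, c ≠ q → B p c < B p q) :
    ∃ k : ℕ, 1 ≤ k ∧ X (t₀ + k) = p' ∧ Y (t₀ + k) = q ∧ U t₀ p ≤ k ∧
      (∀ r, U (t₀ + k) r = U t₀ r + k * B r q) ∧ (∀ c, V (t₀ + k) c = V t₀ c + k * B p c) := by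
  have hp : p ∈ Finset.Icc 1 n := hX ▸ h.memX t₀ ht₀
  have hq : q ∈ Finset.Icc 1 n := hY ▸ h.memY t₀ ht₀
  have hex : ∃ k, X (t₀ + k) ≠ p := by
    -- otherwise `p'` would overtake `p` after more than `U t₀ p` rounds
    by_contra! hall
    obtain ⟨k, hk⟩ := exists_nat_gt (max (U t₀ p) 0)
    have hk0 : 0 < k := by
      have : (0 : ℝ) < k := lt_of_le_of_lt (le_max_right _ _) hk
      exact_mod_cast this
    have hk1 : U t₀ p < k := lt_of_le_of_lt (le_max_left _ _) hk
    have hs := h.stick ht₀ hY hq hV hB k fun j _ => hall j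
    obtain ⟨h1, -⟩ := h.const ht₀ k fun j hj => ⟨hall j, hs j hj.le⟩
    have ho := h.optU (t₀ + k) (by omega) p' hp'
    rw [hall k, h1, h1, hU', hBp'] at ho
    linarith
  classical
  obtain ⟨k, hk, hmin⟩ : ∃ k, X (t₀ + k) ≠ p ∧ ∀ j, j < k → X (t₀ + j) = p :=
    ⟨Nat.find hex, Nat.find_spec hex, fun j hj => not_not.1 (Nat.find_min hex hj)⟩
  have hk0 : 1 ≤ k := by
    rcases Nat.eq_zero_or_pos k with rfl | h0
    · exact absurd hX hk
    · exact h0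
  have hkR : (0 : ℝ) < k := by exact_mod_cast hk0
  have hs := h.stick ht₀ hY hq hV hB k hmin
  obtain ⟨h1, h2⟩ := h.const ht₀ k fun j hj => ⟨hmin j hj, hs j hj.le⟩
  have hm := h.memX (t₀ + k) (by omega)
  have hXp' : X (t₀ + k) = p' := by
    by_contra hne
    have ho := h.optU (t₀ + k) (by omega) p hp
    rw [h1, h1, hBr _ hm hk hne] at ho
    have := hU _ hm
    have := mul_pos hkR hBp
    linarith
  refine ⟨k, hk0, hXp', hs k le_rfl, ?_, h1, h2⟩
  have ho := h.optU (t₀ + k) (by omega) p hp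
  rw [hXp', h1, h1, hU', hBp'] at ho
  linarith

/-! ### Rows and columns of the matrix -/

theorem Amat_col_low {m l r : ℕ} (hl : l < m) (hr : r ∈ Finset.Icc 1 (2 * m)) :
    Amat (2 * m) r (l + 1) =
      if r = l + 1 then 4 * (l : ℝ) + 2 else if r = 2 * m - l then 4 * (l : ℝ) + 1 else 0 := by
  rw [Finset.mem_Icc] at hr
  unfold Amat
  split_ifs <;> first | (exfalso; omega) | (subst_vars; push_cast; ring1)

theorem Amat_col_high {m l r : ℕ} (hl : l + 2 ≤ m) (hr : r ∈ Finset.Icc 1 (2 * m)) :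
    Amat (2 * m) r (2 * m - l) =
      if r = l + 1 then 4 * (l : ℝ) + 3 else if r = 2 * m - l - 1 then 4 * (l : ℝ) + 4 else 0 := by
  rw [Finset.mem_Icc] at hr
  unfold Amat
  split_ifs <;> first
    | (exfalso; omega)
    | (subst_vars; push_cast; ring1)
    | rfl
    | (have e : ((2 * m : ℕ) : ℝ) = (r : ℝ) + l + 1 := by exact_mod_cast (by omega)
       rw [e]; ring)

theorem Amat_row_low {m l c : ℕ} (hl : l < m) (hc : c ∈ Finset.Icc 1 (2 * m)) :
    Amat (2 * m) (l + 1) c =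
      if c = l + 1 then 4 * (l : ℝ) + 2 else if c = 2 * m - l then 4 * (l : ℝ) + 3 else 0 := by
  rw [Finset.mem_Icc] at hc
  unfold Amat
  split_ifs <;> first | (exfalso; omega) | (subst_vars; push_cast; ring1)

theorem Amat_row_high {m l c : ℕ} (hl : l < m) (hc : c ∈ Finset.Icc 1 (2 * m)) :
    Amat (2 * m) (2 * m - l) c =
      if c = l + 1 then 4 * (l : ℝ) + 1 else if c = 2 * m - l + 1 then 4 * (l : ℝ) else 0 := by
  rw [Finset.mem_Icc] at hc
  unfold Amat
  have e : ((2 * m - l : ℕ) : ℝ) = (2 * m : ℕ) - (l : ℝ) := by rw [Nat.cast_sub (by omega)]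
  split_ifs <;> first
    | (exfalso; omega)
    | (subst_vars; push_cast; ring1)
    | rfl
    | (rw [e]; ring)

theorem Amat_nonneg {n i j : ℕ} : 0 ≤ Amat n i j := by
  unfold Amat
  split_ifs with h1 h2 h3 h4
  · have : (1 : ℝ) ≤ i := by exact_mod_cast h1.2.1
    linarith
  · have : (1 : ℝ) ≤ i := by exact_mod_cast h2.2.1
    linarith
  · have : (1 : ℝ) ≤ j := by exact_mod_cast h3.2.1
    linarith
  · have : (i : ℝ) ≤ n := by exact_mod_cast (by omega)
    linarith
  · exact le_rfl

theorem Rcum_nonneg {n : ℕ} {J : ℕ → ℕ} {t r : ℕ} : 0 ≤ Rcum n J t r :=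
  Finset.sum_nonneg fun _ _ => Amat_nonneg

theorem Ccum_nonneg {n : ℕ} {I : ℕ → ℕ} {t c : ℕ} : 0 ≤ Ccum n I t c :=
  Finset.sum_nonneg fun _ _ => Amat_nonneg

theorem sum_Icc_step (f : ℕ → ℝ) {t : ℕ} (ht : 1 ≤ t) :
    ∑ s ∈ Finset.Icc 1 (t + 1 - 1), f s = ∑ s ∈ Finset.Icc 1 (t - 1), f s + f t := by
  obtain ⟨u, rfl⟩ : ∃ u, t = u + 1 := ⟨t - 1, by omega⟩
  simp only [Nat.add_sub_cancel]
  exact Finset.sum_Icc_succ_top (by omega) f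

theorem IsFPSeq.play {n : ℕ} {I J : ℕ → ℕ} (h : IsFPSeq n I J) :
    Play n (Amat n) I J (Rcum n J) (Ccum n I) where
  memX t ht := (h.1 t ht).1
  memY t ht := (h.1 t ht).2
  stepU t ht r := sum_Icc_step (fun s => Amat n r (J s)) ht
  stepV t ht c := sum_Icc_step (fun s => Amat n (I s) c) ht
  optU _ ht := (h.2 _ ht).1
  optV _ ht := (h.2 _ ht).2

/-! ### One turn of the spiral -/

/-- The situation at round `T_ℓ`: the pair `(n-ℓ, ℓ+1)` is played, both strategies are optimal, and
the strategies further inside the spiral have cumulative utility `0`. Optimality is a separate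
requirement because fictitious play does not impose it at round `1`. -/
structure SpiralState (n : ℕ) (I J : ℕ → ℕ) (l t : ℕ) : Prop where
  pos : 1 ≤ t
  row : I t = n - l
  col : J t = l + 1
  optR : ∀ r ∈ Finset.Icc 1 n, Rcum n J t r ≤ Rcum n J t (n - l)
  optC : ∀ c ∈ Finset.Icc 1 n, Ccum n I t c ≤ Ccum n I t (l + 1)
  zeroR : ∀ r, l + 1 ≤ r → r ≤ n - l - 1 → Rcum n J t r = 0
  zeroC : ∀ c, l + 2 ≤ c → c ≤ n - l → Ccum n I t c = 0

/-- One full turn of the spiral, from `(n-ℓ, ℓ+1)` to `(n-ℓ-1, ℓ+2)` with `n = 2m`, as four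
applications of `Play.stage`. -/
theorem phase {m : ℕ} {I J : ℕ → ℕ} (hFP : IsFPSeq (2 * m) I J) {l t : ℕ} (hl : l + 2 ≤ m)
    (h : SpiralState (2 * m) I J l t) :
    ∃ t', t < t' ∧ SpiralState (2 * m) I J (l + 1) t' ∧
      4 ≤ Rcum (2 * m) J t' (2 * m - (l + 1)) ∧
      (4 * (l : ℝ) + 4) * (4 * (l : ℝ) + 3) * (4 * (l : ℝ) + 2) * (4 * (l : ℝ) + 1) *
        Rcum (2 * m) J t (2 * m - l) ≤ Rcum (2 * m) J t' (2 * m - (l + 1)) := by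
  have P := hFP.play
  obtain ⟨ht, hI, hJ, hoR, hoC, hzR, hzC⟩ := h
  have hl0 : (0 : ℝ) ≤ l := Nat.cast_nonneg l
  -- the four lines of the matrix on which this turn takes place
  have cL := fun r hr => Amat_col_low (m := m) (l := l) (r := r) (by omega) hr
  have cH := fun r hr => Amat_col_high (m := m) (l := l) (r := r) (by omega) hr
  have rL := fun c hc => Amat_row_low (m := m) (l := l) (c := c) (by omega) hc
  have rH := fun c hc => Amat_row_high (m := m) (l := l) (c := c) (by omega) hc
  have rH' := fun c hc => Amat_row_high (m := m) (l := l + 1) (c := c) (by omega) hc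
  have m1 : l + 1 ∈ Finset.Icc 1 (2 * m) := Finset.mem_Icc.2 (by omega)
  have m2 : l + 2 ∈ Finset.Icc 1 (2 * m) := Finset.mem_Icc.2 (by omega)
  have m3 : 2 * m - l ∈ Finset.Icc 1 (2 * m) := Finset.mem_Icc.2 (by omega)
  have m4 : 2 * m - (l + 1) ∈ Finset.Icc 1 (2 * m) := Finset.mem_Icc.2 (by omega)
  have d1 : 2 * m - l ≠ l + 1 := by omega
  have d2 : 2 * m - (l + 1) ≠ l + 1 := by omega
  have d3 : 2 * m - l ≠ l + 2 := by omega
  have a1 : Amat (2 * m) (2 * m - l) (l + 1) = 4 * l + 1 := by rw [cL _ m3]; simp [d1]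
  have a2 : Amat (2 * m) (l + 1) (l + 1) = 4 * l + 2 := by rw [cL _ m1]; simp
  have a3 : Amat (2 * m) (l + 1) (2 * m - l) = 4 * l + 3 := by rw [cH _ m1]; simp
  have a4 : Amat (2 * m) (2 * m - (l + 1)) (2 * m - l) = 4 * l + 4 := by
    rw [cH _ m4, if_neg d2, if_pos (by omega)]
  have a5 : Amat (2 * m) (2 * m - (l + 1)) (l + 2) = 4 * l + 5 := by
    rw [rH' _ m2, if_pos rfl]; push_cast; ring
  -- the row player moves from `n - ℓ` to `ℓ + 1`
  obtain ⟨k₁, hk₁, hI₁, hJ₁, hb₁, hR₁, hC₁⟩ := P.stage (p' := l + 1) ht hI hJ hoR hoC m1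
    (hzR _ le_rfl (by omega)) (by rw [a1]; positivity) (by rw [a1, a2]; ring)
    (fun r hr e1 e2 => by rw [cL r hr, if_neg e2, if_neg e1])
    (fun c hc e => by rw [a1, rH c hc, if_neg e]; split_ifs <;> linarith)
  have ht₁ : 2 ≤ t + k₁ := by omega
  have oR₁ := P.optU _ ht₁
  have oC₁ := P.optV _ ht₁
  rw [hI₁] at oR₁
  rw [hJ₁] at oC₁
  -- the column player moves from `ℓ + 1` to `n - ℓ`
  obtain ⟨k₂, hk₂, hJ₂, hI₂, hb₂, hC₂, hR₂⟩ := P.swap.stage (p' := 2 * m - l) (by omega) hJ₁ hI₁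
    oC₁ oR₁ m3
    (by rw [hC₁, hzC _ (by omega) le_rfl, rH _ m3, if_neg d1, if_neg (by omega)]; ring)
    (by rw [a2]; positivity) (by rw [a2, a3]; ring)
    (fun c hc e1 e2 => by rw [rL c hc, if_neg e1, if_neg e2])
    (fun r hr e => by rw [a2, cL r hr, if_neg e]; split_ifs <;> linarith)
  have ht₂ : 2 ≤ t + k₁ + k₂ := by omega
  have oR₂ := P.optU _ ht₂
  have oC₂ := P.optV _ ht₂
  rw [hI₂] at oR₂
  rw [hJ₂] at oC₂
  -- the row player moves from `ℓ + 1` to `n - ℓ - 1`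
  obtain ⟨k₃, hk₃, hI₃, hJ₃, hb₃, hR₃, hC₃⟩ := P.stage (p' := 2 * m - (l + 1)) (by omega) hI₂ hJ₂
    oR₂ oC₂ m4
    (by rw [hR₂, hR₁, hzR _ (by omega) (by omega), cL _ m4, if_neg d2, if_neg (by omega)]; ring)
    (by rw [a3]; positivity) (by rw [a3, a4]; ring)
    (fun r hr e1 e2 => by rw [cH r hr, if_neg e1, if_neg (by omega)])
    (fun c hc e => by rw [a3, rL c hc, if_neg e]; split_ifs <;> linarith)
  have ht₃ : 2 ≤ t + k₁ + k₂ + k₃ := by omega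
  have oR₃ := P.optU _ ht₃
  have oC₃ := P.optV _ ht₃
  rw [hI₃] at oR₃
  rw [hJ₃] at oC₃
  -- the column player moves from `n - ℓ` to `ℓ + 2`
  obtain ⟨k₄, hk₄, hJ₄, hI₄, hb₄, hC₄, hR₄⟩ := P.swap.stage (p' := l + 2) (by omega) hJ₃ hI₃
    oC₃ oR₃ m2
    (by
      rw [hC₃, hC₂, hC₁, hzC _ le_rfl (by omega), rH _ m2, rL _ m2, if_neg (by omega),
        if_neg (by omega), if_neg (by omega), if_neg (by omega)]; ring)
    (by rw [a4]; positivity) (by rw [a4, a5]; ring)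
    (fun c hc e1 e2 => by rw [rH' c hc, if_neg e2, if_neg (by omega)])
    (fun r hr e => by rw [a4, cH r hr, if_neg (show r ≠ 2 * m - l - 1 by omega)]
                      split_ifs <;> linarith)
  have ht₄ : 2 ≤ t + k₁ + k₂ + k₃ + k₄ := by omega
  have oR₄ := P.optU _ ht₄
  have oC₄ := P.optV _ ht₄
  rw [hI₄] at oR₄
  rw [hJ₄] at oC₄
  refine ⟨t + k₁ + k₂ + k₃ + k₄, by omega,
    ⟨by omega, hI₄, hJ₄, oR₄, oC₄, fun r h1 h2 => ?_, fun c h1 h2 => ?_⟩, ?_, ?_⟩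
  · have hr : r ∈ Finset.Icc 1 (2 * m) := Finset.mem_Icc.2 (by omega)
    rw [hR₄, hR₃, hR₂, hR₁, hzR _ (by omega) (by omega), cL _ hr, cH _ hr, if_neg (by omega),
      if_neg (by omega), if_neg (by omega), if_neg (by omega)]
    ring
  · have hc : c ∈ Finset.Icc 1 (2 * m) := Finset.mem_Icc.2 (by omega)
    rw [hC₄, hC₃, hC₂, hC₁, hzC _ (by omega) (by omega), rH _ hc, rL _ hc, rH' _ hc,
      if_neg (by omega), if_neg (by omega), if_neg (by omega), if_neg (by omega),
      if_neg (by omega), if_neg (by omega)]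
    ring
  · have h1 : (1 : ℝ) ≤ k₄ := by exact_mod_cast hk₄
    have h2 : 0 ≤ Rcum (2 * m) J (t + k₁ + k₂ + k₃) (2 * m - (l + 1)) := Rcum_nonneg
    rw [hR₄, a4]
    nlinarith
  · -- each leg is at least as long as (payoff) × (length of the preceding leg)
    have e2 : (4 * (l : ℝ) + 1) * k₁ ≤ k₂ := by
      have : 0 ≤ Ccum (2 * m) I t (l + 1) := Ccum_nonneg
      rw [hC₁, a1] at hb₂
      linarith
    have e3 : (4 * (l : ℝ) + 2) * k₂ ≤ k₃ := by
      have : 0 ≤ Rcum (2 * m) J (t + k₁) (l + 1) := Rcum_nonneg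
      rw [hR₂, a2] at hb₃
      linarith
    have e4 : (4 * (l : ℝ) + 3) * k₃ ≤ k₄ := by
      have : 0 ≤ Ccum (2 * m) I (t + k₁ + k₂) (2 * m - l) := Ccum_nonneg
      rw [hC₃, a3] at hb₄
      linarith
    have e5 : (4 * (l : ℝ) + 4) * k₄ ≤
        Rcum (2 * m) J (t + k₁ + k₂ + k₃ + k₄) (2 * m - (l + 1)) := by
      have : 0 ≤ Rcum (2 * m) J (t + k₁ + k₂ + k₃) (2 * m - (l + 1)) := Rcum_nonneg
      rw [hR₄, a4]
      linarith
    calc _ = (4 * (l : ℝ) + 4) * ((4 * (l : ℝ) + 3) * ((4 * (l : ℝ) + 2) *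
          ((4 * (l : ℝ) + 1) * Rcum (2 * m) J t (2 * m - l)))) := by ring
      _ ≤ (4 * (l : ℝ) + 4) * ((4 * (l : ℝ) + 3) * ((4 * (l : ℝ) + 2) *
          ((4 * (l : ℝ) + 1) * k₁))) := by gcongr
      _ ≤ (4 * (l : ℝ) + 4) * ((4 * (l : ℝ) + 3) * ((4 * (l : ℝ) + 2) * k₂)) := by gcongr
      _ ≤ (4 * (l : ℝ) + 4) * ((4 * (l : ℝ) + 3) * k₃) := by gcongr
      _ ≤ (4 * (l : ℝ) + 4) * k₄ := by gcongr
      _ ≤ _ := e5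

/-- Column `ℓ+1` was not played before `T_ℓ`: it would have left a positive utility on
row `ℓ+1`. -/
theorem SpiralState.col_ne {n : ℕ} {I J : ℕ → ℕ} {l t : ℕ} (h : SpiralState n I J l t)
    (hl : l + 1 ≤ n / 2) {s : ℕ} (hs : 1 ≤ s) (hst : s < t) : J s ≠ l + 1 := by
  intro e
  have hz : ∑ s ∈ Finset.Icc 1 (t - 1), Amat n (l + 1) (J s) = 0 :=
    h.zeroR (l + 1) le_rfl (by omega)
  have h0 := (Finset.sum_eq_zero_iff_of_nonneg fun _ _ => Amat_nonneg).1 hz s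
    (Finset.mem_Icc.2 (by omega))
  rw [e, Amat, if_pos ⟨rfl, by omega, hl⟩] at h0
  have : (0 : ℝ) ≤ l := Nat.cast_nonneg l
  push_cast at h0
  linarith

/-- the main inductive lemma: existence of the rounds `T_0 < T_1 < ⋯ < T_{n/2−1}`
at which the profiles `(n−ℓ, ℓ+1)` are played for the first time, with the stated zero
cumulative utilities and the recursive growth of `R^{(T_ℓ)}_{n−ℓ}`. -/
theorem fp_spiral_rounds
    (n : ℕ) (hn : 4 ≤ n) (hneven : Even n)
    (I J : ℕ → ℕ) (hFP : IsFPSeq n I J) (hI1 : I 1 = n) (hJ1 : J 1 = 1) :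
    ∃ T : ℕ → ℕ, T 0 = 1 ∧ (∀ ℓ, ℓ < n / 2 - 1 → T ℓ < T (ℓ + 1)) ∧
      (∀ ℓ ≤ n / 2 - 1,
        (I (T ℓ) = n - ℓ ∧ J (T ℓ) = ℓ + 1) ∧
        (∀ t, 1 ≤ t → t < T ℓ → (I t, J t) ≠ (n - ℓ, ℓ + 1)) ∧
        (∀ r, ℓ + 1 ≤ r → r ≤ n - ℓ - 1 → Rcum n J (T ℓ) r = 0) ∧
        (∀ c, ℓ + 2 ≤ c → c ≤ n - ℓ → Ccum n I (T ℓ) c = 0)) ∧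
      Rcum n J (T 1) (n - 1) ≥ 4 ∧
      (∀ ℓ, 2 ≤ ℓ → ℓ ≤ n / 2 - 1 →
        Rcum n J (T ℓ) (n - ℓ) ≥
          (4 * (ℓ : ℝ)) * (4 * (ℓ : ℝ) - 1) * (4 * (ℓ : ℝ) - 2) * (4 * (ℓ : ℝ) - 3) *
            Rcum n J (T (ℓ - 1)) (n - ℓ + 1)) := by
  obtain ⟨m, hm⟩ := hneven
  obtain rfl : n = 2 * m := by omega
  have hdiv : 2 * m / 2 = m := by omega
  have key : ∀ l t : ℕ, ∃ t', l + 2 ≤ m → SpiralState (2 * m) I J l t →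
      t < t' ∧ SpiralState (2 * m) I J (l + 1) t' ∧
      4 ≤ Rcum (2 * m) J t' (2 * m - (l + 1)) ∧
      (4 * (l : ℝ) + 4) * (4 * (l : ℝ) + 3) * (4 * (l : ℝ) + 2) * (4 * (l : ℝ) + 1) *
        Rcum (2 * m) J t (2 * m - l) ≤ Rcum (2 * m) J t' (2 * m - (l + 1)) := by
    intro l t
    by_cases hc : l + 2 ≤ m ∧ SpiralState (2 * m) I J l t
    · obtain ⟨t', ht'⟩ := phase hFP hc.1 hc.2
      exact ⟨t', fun _ _ => ht'⟩
    · exact ⟨0, fun h1 h2 => absurd ⟨h1, h2⟩ hc⟩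
  choose next hnext using key
  let T : ℕ → ℕ := fun l => Nat.rec 1 next l
  have hTs : ∀ l, T (l + 1) = next l (T l) := fun l => rfl
  have hT : ∀ l, l + 1 ≤ m → SpiralState (2 * m) I J l (T l) := by
    intro l
    induction l with
    | zero =>
      intro _
      -- at round `1` all cumulative utilities are empty sums
      refine ⟨le_rfl, hI1, hJ1, ?_, ?_, ?_, ?_⟩ <;> simp [T, Rcum, Ccum]
    | succ l ih =>
      intro h
      exact (hnext l (T l) (by omega) (ih (by omega))).2.1
  refine ⟨T, rfl, fun l hl => ?_, fun l hl => ?_, ?_, fun l h2 hl => ?_⟩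
  · exact (hnext l (T l) (by omega) (hT l (by omega))).1
  · have S := hT l (by omega)
    refine ⟨⟨S.row, S.col⟩, fun t h1 h2 e => ?_, S.zeroR, S.zeroC⟩
    exact S.col_ne (by omega) h1 h2 (Prod.mk.inj e).2
  · exact (hnext 0 (T 0) (by omega) (hT 0 (by omega))).2.2.1
  · obtain ⟨l, rfl⟩ : ∃ k, l = k + 1 := ⟨l - 1, by omega⟩
    have hg := (hnext l (T l) (by omega) (hT l (by omega))).2.2.2
    rw [← hTs] at hg
    have e1 : 2 * m - (l + 1) + 1 = 2 * m - l := by omega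
    rw [Nat.add_sub_cancel, e1]
    refine le_trans (le_of_eq ?_) hg
    push_cast
    ring
end

section
/- Let n ≥ 2 be an even integer and let A be the matrix defined below. The nonzero entries of A are exactly the integers 1, 2, …, 2n−1, and each of these values occurs at exactly one position of A; consequently every row and every column of A contains at most two nonzero entries, and these have distinct values. -/
/-!
Write `n = 2m`. The four families of nonzero entries take values in the four residue classes
modulo `4`: the diagonal `(i, i)`, `i ≤ m`, carries `4i - 2`; the upper half of the antidiagonal
`4i - 1`; its lower half `4j - 3`; and the superdiagonal `(i, i + 1)`, `i > m`, carries `4(n - i)`.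
Hence a nonzero value determines its family by its residue and its position by its quotient, and
every value in `1, …, 4m - 1` is reached. The entries are natural numbers, so `Amat_eq_cast` moves
the whole question to linear arithmetic over `ℕ`. Each row meets the support in at most two
explicit columns (the antidiagonal one, and the diagonal or superdiagonal one), and likewise for
columns.
-/

open Finset

/-- The matrix `Amat` with natural number entries. The subtractions are never truncated at
positions where the corresponding condition holds. -/
def AmatNat (n i j : ℕ) : ℕ :=
  if i = j ∧ 1 ≤ i ∧ i ≤ n / 2 then 4 * i - 2
  else if i + j = n + 1 ∧ 1 ≤ i ∧ i ≤ n / 2 then 4 * i - 1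
  else if i + j = n + 1 ∧ 1 ≤ j ∧ j ≤ n / 2 then 4 * j - 3
  else if j = i + 1 ∧ n / 2 + 1 ≤ i ∧ i ≤ n - 1 then 4 * (n - i)
  else 0

lemma Amat_eq_cast (n i j : ℕ) : Amat n i j = (AmatNat n i j : ℝ) := by
  unfold Amat AmatNat
  split_ifs with h1 h2 h3 h4
  · rw [Nat.cast_sub (by omega)]; push_cast; ring
  · rw [Nat.cast_sub (by omega)]; push_cast; ring
  · rw [Nat.cast_sub (by omega)]; push_cast; ring
  · rw [Nat.cast_mul, Nat.cast_sub (by omega)]; push_cast; ring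
  · simp

lemma AmatNat_le {n : ℕ} (hn : 2 ≤ n) (i j : ℕ) : AmatNat n i j ≤ 2 * n - 1 := by
  unfold AmatNat
  split_ifs <;> omega

/-- A nonzero value occurs at most once: its residue modulo `4` tells the family, its quotient
the position. -/
lemma AmatNat_inj {n i j i' j' : ℕ} (h0 : AmatNat n i j ≠ 0)
    (h : AmatNat n i j = AmatNat n i' j') : i = i' ∧ j = j' := by
  unfold AmatNat at h0 h
  split_ifs at h0 h <;> omega

lemma AmatNat_surj {n v : ℕ} (hneven : Even n) (hv : 1 ≤ v) (hv' : v ≤ 2 * n - 1) :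
    ∃ i j, (1 ≤ i ∧ i ≤ n) ∧ (1 ≤ j ∧ j ≤ n) ∧ AmatNat n i j = v := by
  obtain ⟨m, rfl⟩ := hneven
  have hr : v % 4 = 0 ∨ v % 4 = 1 ∨ v % 4 = 2 ∨ v % 4 = 3 := by omega
  rcases hr with hr | hr | hr | hr
  · refine ⟨m + m - v / 4, m + m - v / 4 + 1, by omega, by omega, ?_⟩
    unfold AmatNat
    split_ifs <;> omega
  · refine ⟨m + m - v / 4, v / 4 + 1, by omega, by omega, ?_⟩
    unfold AmatNat
    split_ifs <;> omega
  · refine ⟨v / 4 + 1, v / 4 + 1, by omega, by omega, ?_⟩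
    unfold AmatNat
    split_ifs <;> omega
  · refine ⟨v / 4 + 1, m + m - v / 4, by omega, by omega, ?_⟩
    unfold AmatNat
    split_ifs <;> omega

lemma AmatNat_row {n i j : ℕ} (h : AmatNat n i j ≠ 0) :
    j = n + 1 - i ∨ j = if i ≤ n / 2 then i else i + 1 := by
  unfold AmatNat at h
  split_ifs at h ⊢ <;> omega

lemma AmatNat_col {n i j : ℕ} (h : AmatNat n i j ≠ 0) :
    i = n + 1 - j ∨ i = if j ≤ n / 2 then j else j - 1 := by
  unfold AmatNat at h
  split_ifs at h ⊢ <;> omega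

lemma ncard_le_two_of_subset_pair {s : Set ℕ} (a b : ℕ) (h : ∀ x ∈ s, x = a ∨ x = b) :
    s.ncard ≤ 2 :=
  (Set.ncard_le_ncard (t := {a, b}) (fun x hx => by simpa using h x hx)).trans
    ((Set.ncard_insert_le a {b}).trans (by simp))

/-- the nonzero entries of `A` are exactly `1, 2, …, 2n−1`, each attained at
exactly one position; consequently every row and every column has at most two nonzero
entries, of distinct values. -/
theorem Amat_entries
    (n : ℕ) (hn : 2 ≤ n) (hneven : Even n) :
    (∀ v : ℕ, 1 ≤ v → v ≤ 2 * n - 1 →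
      ∃! p : ℕ × ℕ, p.1 ∈ Finset.Icc 1 n ∧ p.2 ∈ Finset.Icc 1 n ∧
        Amat n p.1 p.2 = (v : ℝ)) ∧
    (∀ i ∈ Finset.Icc 1 n, ∀ j ∈ Finset.Icc 1 n, Amat n i j ≠ 0 →
      ∃ v : ℕ, 1 ≤ v ∧ v ≤ 2 * n - 1 ∧ Amat n i j = (v : ℝ)) ∧
    (∀ i ∈ Finset.Icc 1 n,
      {j | j ∈ Finset.Icc 1 n ∧ Amat n i j ≠ 0}.ncard ≤ 2 ∧
      ∀ j ∈ Finset.Icc 1 n, ∀ j' ∈ Finset.Icc 1 n, j ≠ j' →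
        Amat n i j ≠ 0 → Amat n i j' ≠ 0 → Amat n i j ≠ Amat n i j') ∧
    (∀ j ∈ Finset.Icc 1 n,
      {i | i ∈ Finset.Icc 1 n ∧ Amat n i j ≠ 0}.ncard ≤ 2 ∧
      ∀ i ∈ Finset.Icc 1 n, ∀ i' ∈ Finset.Icc 1 n, i ≠ i' →
        Amat n i j ≠ 0 → Amat n i' j ≠ 0 → Amat n i j ≠ Amat n i' j) := by
  simp only [Amat_eq_cast, Nat.cast_inj, ne_eq, Nat.cast_eq_zero,
    Finset.mem_Icc]
  refine ⟨fun v hv hv' => ?_, fun i _ j _ h => ?_, fun i _ => ⟨?_, ?_⟩, fun j _ => ⟨?_, ?_⟩⟩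
  · obtain ⟨i, j, hi, hj, h⟩ := AmatNat_surj hneven hv hv'
    refine ⟨(i, j), ⟨hi, hj, h⟩, ?_⟩
    rintro ⟨i', j'⟩ ⟨-, -, h'⟩
    have := AmatNat_inj (n := n) (i := i') (j := j') (by simp only at h'; omega) (h'.trans h.symm)
    exact Prod.ext this.1 this.2
  · exact ⟨AmatNat n i j, Nat.pos_of_ne_zero h, AmatNat_le hn i j, rfl⟩
  · exact ncard_le_two_of_subset_pair _ _ fun j hj => AmatNat_row hj.2
  · exact fun j _ j' _ hne h _ heq => hne (AmatNat_inj h heq).2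
  · exact ncard_le_two_of_subset_pair _ _ fun i hi => AmatNat_col hi.2
  · exact fun i _ i' _ hne h _ heq => hne (AmatNat_inj h heq).1
end

section
/- Let n ≥ 4 be an even integer and let A be the matrix defined below. For any position (i, j) with A_{i,j} ≠ 0, there is at most one position (i', j') ≠ (i, j) lying in row i or in column j (i.e., with i' = i or j' = j) such that A_{i',j'} ≠ 0 and A_{i',j'} > A_{i,j}, and there is at most one position (i', j') ≠ (i, j) lying in row i or in column j such that A_{i',j'} ≠ 0 and A_{i',j'} < A_{i,j}. -/
/-!
The nonzero entries of `A` are `1, 2, …, 2n - 1`, each occurring exactly once, and they form a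
staircase: two distinct nonzero entries in a common row or column are consecutive integers.
Hence a larger nonzero neighbour of an entry `v` has value `v + 1`, a smaller one has
value `v - 1`, and by injectivity (`IsEntry.pos_unique`) each of these values determines its
position. The staircase property is `IsEntry.consecutive`.
-/

open Finset

/-- The position `(i, j)` of the matrix carries the nonzero value `v`. The four alternatives are
the diagonal, the upper and lower antidiagonal, and the lower superdiagonal; they are phrased
without subtraction or division. -/
def IsEntry (n i j v : ℕ) : Prop :=
  (i = j ∧ 1 ≤ i ∧ 2 * i ≤ n ∧ v + 2 = 4 * i) ∨
  (i + j = n + 1 ∧ 1 ≤ i ∧ 2 * i ≤ n ∧ v + 1 = 4 * i) ∨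
  (i + j = n + 1 ∧ 1 ≤ j ∧ 2 * j ≤ n ∧ v + 3 = 4 * j) ∨
  (j = i + 1 ∧ n + 1 ≤ 2 * i ∧ i + 1 ≤ n ∧ v + 4 * i = 4 * n)

lemma exists_isEntry {n i j : ℕ} (h : Amat n i j ≠ 0) :
    ∃ v : ℕ, Amat n i j = v ∧ IsEntry n i j v := by
  unfold Amat at h ⊢
  split_ifs at h ⊢ with h1 h2 h3 h4
  · refine ⟨4 * i - 2, ?_, Or.inl (by omega)⟩
    rw [Nat.cast_sub (by omega)]
    push_cast
    ring
  · refine ⟨4 * i - 1, ?_, Or.inr (Or.inl (by omega))⟩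
    rw [Nat.cast_sub (by omega)]
    push_cast
    ring
  · refine ⟨4 * j - 3, ?_, Or.inr (Or.inr (Or.inl (by omega)))⟩
    rw [Nat.cast_sub (by omega)]
    push_cast
    ring
  · refine ⟨4 * (n - i), ?_, Or.inr (Or.inr (Or.inr (by omega)))⟩
    rw [Nat.cast_mul, Nat.cast_sub (by omega)]
    norm_num
  · exact absurd rfl h

/-- A nonzero value occurs only once: its residue mod `4` selects the alternative of `IsEntry`,
and the value then fixes the index. -/
lemma IsEntry.pos_unique {n i j k l v : ℕ} (h : IsEntry n i j v) (h' : IsEntry n k l v) :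
    i = k ∧ j = l := by
  unfold IsEntry at h h'
  omega

lemma IsEntry.consecutive {n i j k l v w : ℕ} (hn : Even n) (h : IsEntry n i j v)
    (h' : IsEntry n k l w) (hline : k = i ∨ l = j) (hne : (k, l) ≠ (i, j)) :
    w = v + 1 ∨ v = w + 1 := by
  obtain ⟨m, rfl⟩ := hn
  have hne' : ¬(k = i ∧ l = j) := fun e => hne (by rw [e.1, e.2])
  unfold IsEntry at h h'
  omega

/-- for every nonzero entry of `A`, in its row and column combined there is at
most one strictly larger nonzero entry and at most one strictly smaller nonzero entry. -/
theorem Amat_at_most_one_larger_smaller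
    (n : ℕ) (hn : 4 ≤ n) (hneven : Even n) :
    ∀ i ∈ Finset.Icc 1 n, ∀ j ∈ Finset.Icc 1 n, Amat n i j ≠ 0 →
      (∀ p q : ℕ × ℕ,
        (p.1 ∈ Finset.Icc 1 n ∧ p.2 ∈ Finset.Icc 1 n ∧ p ≠ (i, j) ∧
          (p.1 = i ∨ p.2 = j) ∧ Amat n p.1 p.2 ≠ 0 ∧ Amat n i j < Amat n p.1 p.2) →
        (q.1 ∈ Finset.Icc 1 n ∧ q.2 ∈ Finset.Icc 1 n ∧ q ≠ (i, j) ∧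
          (q.1 = i ∨ q.2 = j) ∧ Amat n q.1 q.2 ≠ 0 ∧ Amat n i j < Amat n q.1 q.2) →
        p = q) ∧
      (∀ p q : ℕ × ℕ,
        (p.1 ∈ Finset.Icc 1 n ∧ p.2 ∈ Finset.Icc 1 n ∧ p ≠ (i, j) ∧
          (p.1 = i ∨ p.2 = j) ∧ Amat n p.1 p.2 ≠ 0 ∧ Amat n p.1 p.2 < Amat n i j) →
        (q.1 ∈ Finset.Icc 1 n ∧ q.2 ∈ Finset.Icc 1 n ∧ q ≠ (i, j) ∧
          (q.1 = i ∨ q.2 = j) ∧ Amat n q.1 q.2 ≠ 0 ∧ Amat n q.1 q.2 < Amat n i j) →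
        p = q) := by
  intro i _ j _ hij
  obtain ⟨v, hv, hEv⟩ := exists_isEntry hij
  constructor <;>
  · rintro ⟨a, b⟩ ⟨c, d⟩ ⟨-, -, hp, hpl, hp0, hplt⟩ ⟨-, -, hq, hql, hq0, hqlt⟩
    obtain ⟨w, hw, hEw⟩ := exists_isEntry hp0
    obtain ⟨u, hu, hEu⟩ := exists_isEntry hq0
    rw [hv, hw, Nat.cast_lt] at hplt
    rw [hv, hu, Nat.cast_lt] at hqlt
    have hwv := hEv.consecutive hneven hEw hpl hp
    have huv := hEv.consecutive hneven hEu hql hq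
    obtain rfl : w = u := by omega
    obtain ⟨hac, hbd⟩ := hEw.pos_unique hEu
    exact Prod.ext hac hbd
end

section
/- Let n ≥ 4 be an even integer and let A be the matrix defined below. Consider any fictitious play sequence (i^{(t)}, j^{(t)}) for the identical-payoff game with matrix A with (i^{(1)}, j^{(1)}) = (n, 1). Let t be a round such that A_{i^{(t)}, j^{(t)}} ≠ 0 and (i^{(t)}, j^{(t)}) ≠ (n/2, n/2+1). Then there exists a position (i*, j*) with (i* = i^{(t)} or j* = j^{(t)}) and A_{i*,j*} > A_{i^{(t)}, j^{(t)}}, this position is unique, and there exists a round t' > t with (i^{(t')}, j^{(t')}) = (i*, j*). -/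
/-!
The nonzero entries of `A` form a path. Order the rows as `n, 1, n-1, 2, …` (`rowV n 0, rowV n 1, …`)
and the columns as `1, n, 2, n-1, …` (`colV n 0, colV n 1, …`). In these coordinates `A` becomes the
bidiagonal matrix `Bmat` with `B a a = 2a+1` and `B (b+1) b = 2b+2`, so the entries `1, 2, 3, …` are
met along the staircase `(0,0), (1,0), (1,1), (2,1), …` (`Amat_rowV_colV`).

The play walks up this staircase. At every round the played profile is a staircase position, and
the invariant `StairInv` holds: the player who does not move in the step to the next position has the
current strategy as strict unique best response, while for the other player the current strategy
strictly beats everything except possibly the strategy of the next position. Hence each round either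
repeats the profile or advances one step (`inv_step`). While the profile is repeated, the next
strategy of the moving player gains exactly one unit per round on the current one, so the
profile cannot be repeated forever (`exists_switch_row`, `exists_switch_col`).
-/

open Finset

/-! ### Staircase coordinates -/

/-- The staircase matrix: `A` after reordering rows by `rowV` and columns by `colV`. -/
noncomputable def Bmat (a b : ℕ) : ℝ :=
  if a = b then 2 * (b : ℝ) + 1 else if a = b + 1 then 2 * (b : ℝ) + 2 else 0

/-- The reordering `n, 1, n-1, 2, …` of the rows. -/
def rowV (n a : ℕ) : ℕ := if a % 2 = 0 then n - a / 2 else (a + 1) / 2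

/-- The reordering `1, n, 2, n-1, …` of the columns. -/
def colV (n b : ℕ) : ℕ := if b % 2 = 0 then b / 2 + 1 else n - b / 2

lemma rowV_mem {n a : ℕ} (hneven : Even n) (ha : a < n) : rowV n a ∈ Finset.Icc 1 n := by
  obtain ⟨m, rfl⟩ := hneven
  rw [Finset.mem_Icc]; unfold rowV; split_ifs <;> omega

lemma colV_mem {n b : ℕ} (hneven : Even n) (hb : b < n) : colV n b ∈ Finset.Icc 1 n := by
  obtain ⟨m, rfl⟩ := hneven
  rw [Finset.mem_Icc]; unfold colV; split_ifs <;> omega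

lemma exists_rowV {n i : ℕ} (hneven : Even n) (hi : i ∈ Finset.Icc 1 n) :
    ∃ a, a < n ∧ i = rowV n a := by
  obtain ⟨m, rfl⟩ := hneven
  rw [Finset.mem_Icc] at hi
  by_cases h : i ≤ m
  · exact ⟨2 * i - 1, by omega, by unfold rowV; split_ifs <;> omega⟩
  · exact ⟨2 * (m + m - i), by omega, by unfold rowV; split_ifs <;> omega⟩

lemma exists_colV {n j : ℕ} (hneven : Even n) (hj : j ∈ Finset.Icc 1 n) :
    ∃ b, b < n ∧ j = colV n b := by
  obtain ⟨m, rfl⟩ := hneven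
  rw [Finset.mem_Icc] at hj
  by_cases h : j ≤ m
  · exact ⟨2 * (j - 1), by omega, by unfold colV; split_ifs <;> omega⟩
  · exact ⟨2 * (m + m - j) + 1, by omega, by unfold colV; split_ifs <;> omega⟩

lemma Amat_rowV_colV {n a b : ℕ} (hneven : Even n) (ha : a < n) (hb : b < n) :
    Amat n (rowV n a) (colV n b) = Bmat a b := by
  obtain ⟨m, rfl⟩ := hneven
  have hm : (m + m) / 2 = m := by omega
  unfold Amat Bmat
  rw [hm]
  obtain ⟨p, rfl | rfl⟩ : ∃ p, a = 2 * p ∨ a = 2 * p + 1 := ⟨a / 2, by omega⟩ <;>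
  obtain ⟨q, rfl | rfl⟩ : ∃ q, b = 2 * q ∨ b = 2 * q + 1 := ⟨b / 2, by omega⟩
  · have hr : rowV (m + m) (2 * p) = m + m - p := by unfold rowV; split_ifs <;> omega
    have hc : colV (m + m) (2 * q) = q + 1 := by unfold colV; split_ifs <;> omega
    rw [hr, hc]
    split_ifs <;> first | omega | (push_cast; ring)
  · have hr : rowV (m + m) (2 * p) = m + m - p := by unfold rowV; split_ifs <;> omega
    have hc : colV (m + m) (2 * q + 1) = m + m - q := by unfold colV; split_ifs <;> omega
    rw [hr, hc]
    split_ifs <;> first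
      | omega
      | rfl
      | (obtain rfl : p = q + 1 := by omega
         rw [Nat.cast_sub (by omega)]; push_cast; ring)
  · have hr : rowV (m + m) (2 * p + 1) = p + 1 := by unfold rowV; split_ifs <;> omega
    have hc : colV (m + m) (2 * q) = q + 1 := by unfold colV; split_ifs <;> omega
    rw [hr, hc]
    split_ifs <;> first
      | omega
      | rfl
      | (obtain rfl : p = q := by omega
         push_cast; ring)
  · have hr : rowV (m + m) (2 * p + 1) = p + 1 := by unfold rowV; split_ifs <;> omega
    have hc : colV (m + m) (2 * q + 1) = m + m - q := by unfold colV; split_ifs <;> omega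
    rw [hr, hc]
    split_ifs <;> first
      | omega
      | rfl
      | (obtain rfl : p = q := by omega
         push_cast; ring)

/-! ### The invariant -/

/-- The state of play at the staircase position `(x, y)`, where `U` and `V` are the cumulative
utilities of rows and columns including the current round. On the diagonal the row player is the
one to advance (to `x + 1`); below the diagonal it is the column player (to `y + 1`). -/
def StairInv (n : ℕ) (U V : ℕ → ℝ) (x y : ℕ) : Prop :=
  (x = y ∧ (∀ y' < n, y' ≠ y → V y' < V y) ∧
    (∀ x' < n, x' ≠ x → x' ≠ x + 1 → U x' < U x)) ∨
  (x = y + 1 ∧ (∀ x' < n, x' ≠ x → U x' < U x) ∧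
    (∀ y' < n, y' ≠ y → y' ≠ y + 1 → V y' < V y))

/-- One round of play: from `(x, y)`, best responses `x₁, y₁` either repeat the profile or advance
to the next staircase position, and the invariant persists. -/
lemma inv_step {n : ℕ} {U V : ℕ → ℝ} {x y x₁ y₁ : ℕ} (hx : x < n) (hy : y < n)
    (hx₁ : x₁ < n) (hy₁ : y₁ < n) (hinv : StairInv n U V x y)
    (hU : ∀ x' < n, U x' ≤ U x₁) (hV : ∀ y' < n, V y' ≤ V y₁) :
    ((x₁ = x ∧ y₁ = y) ∨ (x = y ∧ x₁ = x + 1 ∧ y₁ = y) ∨ (x = y + 1 ∧ x₁ = x ∧ y₁ = y + 1)) ∧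
    StairInv n (fun x' => U x' + Bmat x' y₁) (fun y' => V y' + Bmat x₁ y') x₁ y₁ := by
  rcases hinv with ⟨rfl, h1, h2⟩ | ⟨rfl, h1, h2⟩
  · have e1 : y₁ = x := by
      by_contra h
      exact absurd (h1 y₁ hy₁ h) (not_lt.mpr (hV x hy))
    subst e1
    have e2 : x₁ = y₁ ∨ x₁ = y₁ + 1 := by
      by_contra! h
      exact absurd (h2 x₁ hx₁ h.1 h.2) (not_lt.mpr (hU y₁ hx))
    have hp : (0 : ℝ) ≤ y₁ := Nat.cast_nonneg _
    rcases e2 with rfl | rfl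
    · refine ⟨Or.inl ⟨rfl, rfl⟩, Or.inl ⟨rfl, fun y' hy' hne => ?_, fun x' hx' hne hne' => ?_⟩⟩
      · have := h1 y' hy' hne
        simp only [Bmat]
        split_ifs <;> first | omega | (subst_vars; push_cast at *; linarith)
      · have := h2 x' hx' hne hne'
        simp only [Bmat]
        split_ifs <;> first | omega | linarith
    · refine ⟨Or.inr (Or.inl ⟨rfl, rfl, rfl⟩),
        Or.inr ⟨rfl, fun x' hx' hne => ?_, fun y' hy' hne hne' => ?_⟩⟩
      · have := hU x' hx'
        simp only [Bmat]
        split_ifs <;> first | omega | linarith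
      · have := h1 y' hy' hne
        simp only [Bmat]
        split_ifs <;> first | omega | linarith
  · have e1 : x₁ = y + 1 := by
      by_contra h
      exact absurd (h1 x₁ hx₁ h) (not_lt.mpr (hU (y + 1) hx))
    subst e1
    have e2 : y₁ = y ∨ y₁ = y + 1 := by
      by_contra! h
      exact absurd (h2 y₁ hy₁ h.1 h.2) (not_lt.mpr (hV y hy))
    have hp : (0 : ℝ) ≤ y := Nat.cast_nonneg _
    rcases e2 with rfl | rfl
    · refine ⟨Or.inl ⟨rfl, rfl⟩, Or.inr ⟨rfl, fun x' hx' hne => ?_, fun y' hy' hne hne' => ?_⟩⟩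
      · have := h1 x' hx' hne
        simp only [Bmat]
        split_ifs <;> first | omega | linarith
      · have := h2 y' hy' hne hne'
        simp only [Bmat]
        split_ifs <;> first | omega | linarith
    · refine ⟨Or.inr (Or.inr ⟨rfl, rfl, rfl⟩),
        Or.inl ⟨rfl, fun y' hy' hne => ?_, fun x' hx' hne hne' => ?_⟩⟩
      · have := hV y' hy'
        simp only [Bmat]
        split_ifs <;> first
          | omega
          | (push_cast; linarith)
          | (obtain rfl : y' = y := by omega
             push_cast; linarith)
      · have := h1 x' hx' hne
        simp only [Bmat]
        split_ifs <;> first | omega | (push_cast; linarith)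

/-! ### Play along the staircase -/

/-- A fictitious play sequence in staircase coordinates: `U t`, `V t` are the cumulative utilities
over rounds `1, …, t`, and play starts at the corner `(0, 0)`. -/
structure StairPlay (n : ℕ) (a b : ℕ → ℕ) (U V : ℕ → ℕ → ℝ) : Prop where
  a_lt : ∀ t, 1 ≤ t → a t < n
  b_lt : ∀ t, 1 ≤ t → b t < n
  bestU : ∀ t, 1 ≤ t → ∀ x < n, U t x ≤ U t (a (t + 1))
  bestV : ∀ t, 1 ≤ t → ∀ y < n, V t y ≤ V t (b (t + 1))
  U_one : U 1 = fun x => Bmat x 0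
  V_one : V 1 = fun y => Bmat 0 y
  U_succ : ∀ t, 1 ≤ t → U (t + 1) = fun x => U t x + Bmat x (b (t + 1))
  V_succ : ∀ t, 1 ≤ t → V (t + 1) = fun y => V t y + Bmat (a (t + 1)) y
  a_one : a 1 = 0
  b_one : b 1 = 0

namespace StairPlay

variable {n : ℕ} {a b : ℕ → ℕ} {U V : ℕ → ℕ → ℝ}

lemma inv (h : StairPlay n a b U V) (t : ℕ) (ht : 1 ≤ t) : StairInv n (U t) (V t) (a t) (b t) := by
  induction t, ht using Nat.le_induction with
  | base =>
    rw [h.U_one, h.V_one, h.a_one, h.b_one]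
    refine Or.inl ⟨rfl, fun y' _ hne => ?_, fun x' _ hne hne' => ?_⟩
    · simp only [Bmat]
      split_ifs <;> first | omega | contradiction | norm_num
    · simp only [Bmat]
      split_ifs <;> first | omega | contradiction | norm_num
  | succ t ht ih =>
    rw [h.U_succ t ht, h.V_succ t ht]
    exact (inv_step (h.a_lt t ht) (h.b_lt t ht) (h.a_lt _ (by omega)) (h.b_lt _ (by omega)) ih
      (h.bestU t ht) (h.bestV t ht)).2

lemma step (h : StairPlay n a b U V) (t : ℕ) (ht : 1 ≤ t) :
    (a (t + 1) = a t ∧ b (t + 1) = b t) ∨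
    (a t = b t ∧ a (t + 1) = a t + 1 ∧ b (t + 1) = b t) ∨
    (a t = b t + 1 ∧ a (t + 1) = a t ∧ b (t + 1) = b t + 1) :=
  (inv_step (h.a_lt t ht) (h.b_lt t ht) (h.a_lt _ (by omega)) (h.b_lt _ (by omega)) (h.inv t ht)
      (h.bestU t ht) (h.bestV t ht)).1

/-- From a diagonal position that is not the last one, the row player eventually advances: each
repetition of `(k, k)` pays `2k+1` to row `k` but `2k+2` to row `k+1`. -/
lemma exists_switch_row (h : StairPlay n a b U V) (t : ℕ) (ht : 1 ≤ t) (hab : a t = b t)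
    (hlt : a t + 1 < n) : ∃ t', t < t' ∧ a t' = a t + 1 ∧ b t' = b t := by
  by_contra! hcon
  -- If the switch never happens, the advantage of `a t + 1` over `a t` grows linearly.
  have key : ∀ d : ℕ, a (t + d) = a t ∧ b (t + d) = b t ∧
      U (t + d) (a t + 1) - U (t + d) (a t) = U t (a t + 1) - U t (a t) + d := by
    intro d
    induction d with
    | zero => simp
    | succ d ih =>
      obtain ⟨i1, i2, i3⟩ := ih
      have e : a (t + d + 1) = a t ∧ b (t + d + 1) = b t := by
        rcases h.step (t + d) (by omega) with s | s | s
        · exact ⟨s.1.trans i1, s.2.trans i2⟩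
        · exact absurd (s.2.2.trans i2) (hcon (t + d + 1) (by omega) (by omega))
        · omega
      refine ⟨e.1, e.2, ?_⟩
      rw [← add_assoc, h.U_succ (t + d) (by omega), e.2, hab]
      rw [hab] at i3
      simp only [Bmat]
      rw [if_neg (by omega)]
      simp only [if_true]
      push_cast
      linarith
  obtain ⟨d, hd⟩ := exists_nat_gt (U t (a t) - U t (a t + 1))
  have h1 := h.bestU (t + d) (by omega) (a t + 1) hlt
  have h2 := (key (d + 1)).1
  rw [← add_assoc] at h2
  rw [h2] at h1
  linarith [(key d).2.2]

/-- From a subdiagonal position the column player eventually advances: each repetition of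
`(k+1, k)` pays `2k+2` to column `k` but `2k+3` to column `k+1`. -/
lemma exists_switch_col (h : StairPlay n a b U V) (t : ℕ) (ht : 1 ≤ t) (hab : a t = b t + 1) :
    ∃ t', t < t' ∧ a t' = a t ∧ b t' = b t + 1 := by
  by_contra! hcon
  have hlt : b t + 1 < n := hab ▸ h.a_lt t ht
  have key : ∀ d : ℕ, a (t + d) = a t ∧ b (t + d) = b t ∧
      V (t + d) (b t + 1) - V (t + d) (b t) = V t (b t + 1) - V t (b t) + d := by
    intro d
    induction d with
    | zero => simp
    | succ d ih =>
      obtain ⟨i1, i2, i3⟩ := ih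
      have e : a (t + d + 1) = a t ∧ b (t + d + 1) = b t := by
        rcases h.step (t + d) (by omega) with s | s | s
        · exact ⟨s.1.trans i1, s.2.trans i2⟩
        · omega
        · exact absurd (by omega) (hcon (t + d + 1) (by omega) (s.2.1.trans i1))
      refine ⟨e.1, e.2, ?_⟩
      rw [← add_assoc, h.V_succ (t + d) (by omega), e.1, hab]
      simp only [Bmat]
      rw [if_neg (by omega : ¬ b t + 1 = b t)]
      simp only [if_true]
      push_cast
      linarith
  obtain ⟨d, hd⟩ := exists_nat_gt (V t (b t) - V t (b t + 1))
  have h1 := h.bestV (t + d) (by omega) (b t + 1) hlt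
  have h2 := (key (d + 1)).2.1
  rw [← add_assoc] at h2
  rw [h2] at h1
  linarith [(key d).2.2]

end StairPlay

/-! ### Transfer to the original game -/

lemma rowV_inj {n a a' : ℕ} (hneven : Even n) (ha : a < n) (ha' : a' < n)
    (h : rowV n a = rowV n a') : a = a' := by
  obtain ⟨m, rfl⟩ := hneven
  unfold rowV at h; split_ifs at h <;> omega

lemma colV_inj {n b b' : ℕ} (hneven : Even n) (hb : b < n) (hb' : b' < n)
    (h : colV n b = colV n b') : b = b' := by
  obtain ⟨m, rfl⟩ := hneven
  unfold colV at h; split_ifs at h <;> omega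

/-- Every fictitious play sequence for `A` started at `(n, 1)` is the image of a play along the
staircase under `rowV` and `colV`. -/
lemma exists_stairPlay {n : ℕ} (hn : 4 ≤ n) (hneven : Even n) {I J : ℕ → ℕ}
    (hFP : IsFPSeq n I J) (hI1 : I 1 = n) (hJ1 : J 1 = 1) :
    ∃ a b U V, StairPlay n a b U V ∧ ∀ t, 1 ≤ t → I t = rowV n (a t) ∧ J t = colV n (b t) := by
  have hA : ∀ t, ∃ x, 1 ≤ t → x < n ∧ I t = rowV n x := fun t => by
    by_cases ht : 1 ≤ t
    · obtain ⟨x, hx⟩ := exists_rowV hneven (hFP.1 t ht).1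
      exact ⟨x, fun _ => hx⟩
    · exact ⟨0, fun h => absurd h ht⟩
  have hB : ∀ t, ∃ y, 1 ≤ t → y < n ∧ J t = colV n y := fun t => by
    by_cases ht : 1 ≤ t
    · obtain ⟨y, hy⟩ := exists_colV hneven (hFP.1 t ht).2
      exact ⟨y, fun _ => hy⟩
    · exact ⟨0, fun h => absurd h ht⟩
  choose a ha using hA
  choose b hb using hB
  have hU : ∀ t, ∀ x < n, ∑ s ∈ Finset.Icc 1 t, Amat n (rowV n x) (J s) =
      ∑ s ∈ Finset.Icc 1 t, Bmat x (b s) := fun t x hx =>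
    Finset.sum_congr rfl fun s hs => by
      have hs := (Finset.mem_Icc.mp hs).1
      rw [(hb s hs).2, Amat_rowV_colV hneven hx (hb s hs).1]
  have hV : ∀ t, ∀ y < n, ∑ s ∈ Finset.Icc 1 t, Amat n (I s) (colV n y) =
      ∑ s ∈ Finset.Icc 1 t, Bmat (a s) y := fun t y hy =>
    Finset.sum_congr rfl fun s hs => by
      have hs := (Finset.mem_Icc.mp hs).1
      rw [(ha s hs).2, Amat_rowV_colV hneven (ha s hs).1 hy]
  have a1 : a 1 = 0 := rowV_inj hneven (ha 1 le_rfl).1 (by omega) <| by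
    rw [← (ha 1 le_rfl).2, hI1]; simp [rowV]
  have b1 : b 1 = 0 := colV_inj hneven (hb 1 le_rfl).1 (by omega) <| by
    rw [← (hb 1 le_rfl).2, hJ1]; simp [colV]
  refine ⟨a, b, fun t x => ∑ s ∈ Finset.Icc 1 t, Bmat x (b s),
    fun t y => ∑ s ∈ Finset.Icc 1 t, Bmat (a s) y,
    ⟨fun t ht => (ha t ht).1, fun t ht => (hb t ht).1, fun t ht x hx => ?_, fun t ht y hy => ?_,
      by simp [b1], by simp [a1], fun t ht => ?_, fun t ht => ?_, a1, b1⟩,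
    fun t ht => ⟨(ha t ht).2, (hb t ht).2⟩⟩
  · have := (hFP.2 (t + 1) (by omega)).1 (rowV n x) (rowV_mem hneven hx)
    rw [Nat.add_sub_cancel, (ha (t + 1) (by omega)).2, hU t x hx,
      hU t _ (ha (t + 1) (by omega)).1] at this
    exact this
  · have := (hFP.2 (t + 1) (by omega)).2 (colV n y) (colV_mem hneven hy)
    rw [Nat.add_sub_cancel, (hb (t + 1) (by omega)).2, hV t y hy,
      hV t _ (hb (t + 1) (by omega)).1] at this
    exact this
  · funext x
    exact Finset.sum_Icc_succ_top (by omega) _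
  · funext y
    exact Finset.sum_Icc_succ_top (by omega) _

/-- strategy switch: from any played nonzero profile other than
`(n/2, n/2+1)`, fictitious play later plays the unique larger-valued position
sharing its row or column. -/
theorem fp_strategy_switch
    (n : ℕ) (hn : 4 ≤ n) (hneven : Even n)
    (I J : ℕ → ℕ) (hFP : IsFPSeq n I J) (hI1 : I 1 = n) (hJ1 : J 1 = 1)
    (t : ℕ) (ht : 1 ≤ t)
    (hnz : Amat n (I t) (J t) ≠ 0)
    (hne : (I t, J t) ≠ (n / 2, n / 2 + 1)) :
    ∃ p : ℕ × ℕ,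
      (p.1 ∈ Finset.Icc 1 n ∧ p.2 ∈ Finset.Icc 1 n ∧
        (p.1 = I t ∨ p.2 = J t) ∧ Amat n (I t) (J t) < Amat n p.1 p.2) ∧
      (∀ q : ℕ × ℕ,
        (q.1 ∈ Finset.Icc 1 n ∧ q.2 ∈ Finset.Icc 1 n ∧
          (q.1 = I t ∨ q.2 = J t) ∧ Amat n (I t) (J t) < Amat n q.1 q.2) → q = p) ∧
      (∃ t', t < t' ∧ (I t', J t') = p) := by
  obtain ⟨a, b, U, V, hS, hIJ⟩ := exists_stairPlay hn hneven hFP hI1 hJ1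
  have hx := hS.a_lt t ht
  have hy := hS.b_lt t ht
  obtain ⟨eI, eJ⟩ := hIJ t ht
  -- It suffices to exhibit, in staircase coordinates, the unique larger entry and a later visit.
  suffices H : ∃ x y, x < n ∧ y < n ∧ (x = a t ∨ y = b t) ∧ Bmat (a t) (b t) < Bmat x y ∧
      (∀ x' y', x' < n → y' < n → (x' = a t ∨ y' = b t) → Bmat (a t) (b t) < Bmat x' y' →
        x' = x ∧ y' = y) ∧ ∃ t', t < t' ∧ a t' = x ∧ b t' = y by
    obtain ⟨x, y, hxn, hyn, hor, hlt, huniq, t', ht', e1, e2⟩ := H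
    refine ⟨(rowV n x, colV n y), ⟨rowV_mem hneven hxn, colV_mem hneven hyn, ?_, ?_⟩, ?_, t', ht', ?_⟩
    · rw [eI, eJ]
      exact hor.imp (fun h => by rw [h]) (fun h => by rw [h])
    · rw [eI, eJ, Amat_rowV_colV hneven hx hy]
      exact hlt.trans_eq (Amat_rowV_colV hneven hxn hyn).symm
    · rintro ⟨q1, q2⟩ ⟨hq1, hq2, hq, hql⟩
      obtain ⟨x', hx', rfl⟩ := exists_rowV hneven hq1
      obtain ⟨y', hy', rfl⟩ := exists_colV hneven hq2
      simp only [eI, eJ] at hq hql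
      rw [Amat_rowV_colV hneven hx hy, Amat_rowV_colV hneven hx' hy'] at hql
      obtain ⟨rfl, rfl⟩ := huniq x' y' hx' hy'
        (hq.imp (rowV_inj hneven hx' hx) (colV_inj hneven hy' hy)) hql
      rfl
    · rw [(hIJ t' (by omega)).1, (hIJ t' (by omega)).2, e1, e2]
  have hp : (0 : ℝ) ≤ b t := Nat.cast_nonneg _
  rcases hS.inv t ht with ⟨hab, -, -⟩ | ⟨hab, -, -⟩
  · -- The top of the staircase, `(n-1, n-1)`, is the excluded position `(n/2, n/2+1)`.
    have hlt : a t + 1 < n := by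
      by_contra hcon
      apply hne
      have ea : a t = n - 1 := by omega
      have eb : b t = n - 1 := by omega
      obtain ⟨m, rfl⟩ := hneven
      rw [eI, eJ, ea, eb, Prod.mk.injEq]
      constructor
      · unfold rowV; split_ifs <;> omega
      · unfold colV; split_ifs <;> omega
    refine ⟨a t + 1, b t, hlt, hy, Or.inr rfl, ?_, ?_, hS.exists_switch_row t ht hab hlt⟩
    · rw [hab]; simp [Bmat]
    · intro x' y' _ _ hor hl
      rw [hab] at hor hl ⊢
      simp only [Bmat, if_true] at hl
      split_ifs at hl with h1 h2
      · exfalso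
        obtain rfl : y' = b t := by omega
        linarith
      · rcases hor with h | h
        · exfalso
          have : (b t : ℝ) = y' + 1 := by exact_mod_cast h.symm.trans h2
          linarith
        · omega
      · linarith
  · refine ⟨a t, b t + 1, hx, by omega, Or.inl rfl, ?_, ?_, hS.exists_switch_col t ht hab⟩
    · rw [hab]; simp [Bmat]; linarith
    · intro x' y' _ _ hor hl
      rw [hab] at hor hl ⊢
      simp only [Bmat, if_true] at hl
      rw [if_neg (by omega)] at hl
      split_ifs at hl with h1 h2
      · rcases hor with h | h
        · omega
        · exfalso
          rw [h] at hl
          linarith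
      · exfalso
        obtain rfl : y' = b t := by omega
        linarith
      · linarith
end
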